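/- arXiv:1809.03049 — 3 statements merged into one kernel-verified Lean document; each statement's English description precedes it below -/
import Mathlib

section
/- For every n ≥ 0, the arm graph A_n has cop number 1; indeed, a single cop starting at the vertex b_2^{-1} has a winning strategy against the robber on A_n. -/
open SimpleGraph

/-! ### Pursuit games on graphs

A round of the game is recorded as a pair `(c, r)` where `c : Fin k → V` is the
configuration of the `k` pursuers (cops or zombies) and `r : V` the position of the
evader (robber or survivor).  In a round the pursuers move first (knowing the full
history), then the evader moves (knowing the full history and the pursuers' new
configuration).  Strategies are functions of the full history, so no generality is lost. -/

/-- The history of a play: the list of (pursuer configuration, evader position) pairs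
for the completed rounds so far. -/
abbrev GameHist (V : Type*) (k : ℕ) := List ((Fin k → V) × V)

/-- The history determined by the sequences `c` (pursuer configurations) and `r`
(evader positions), recording rounds `0, …, n-1`. -/
def histUpTo {V : Type*} {k : ℕ} (c : ℕ → Fin k → V) (r : ℕ → V) (n : ℕ) : GameHist V k :=
  (List.range n).map fun i => (c i, r i)

/-- The robber/survivor always moves along an edge or stays still. -/
def RobberLegal {V : Type*} (G : SimpleGraph V) (r : ℕ → V) : Prop :=
  ∀ n, r (n+1) = r n ∨ G.Adj (r n) (r (n+1))

/-- At step `n`, each cop stays still or moves along an edge. -/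
def CopStepLegal {V : Type*} (G : SimpleGraph V) {k : ℕ} (c : ℕ → Fin k → V) (n : ℕ) : Prop :=
  ∀ i, c (n+1) i = c n i ∨ G.Adj (c n i) (c (n+1) i)

/-- At step `n`, each zombie moves along an edge to a vertex strictly closer to the
survivor's current position `r n`. -/
def ZombieStepLegal {V : Type*} (G : SimpleGraph V) {k : ℕ} (c : ℕ → Fin k → V) (r : ℕ → V)
    (n : ℕ) : Prop :=
  ∀ i, G.Adj (c n i) (c (n+1) i) ∧ G.dist (c (n+1) i) (r n) < G.dist (c n i) (r n)

/-- The pursuers follow the history-dependent strategy `mv`: their configuration at time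
`n+1` is the strategy applied to the history of rounds `0, …, n`. -/
def FollowsStrat {V : Type*} {k : ℕ} (mv : GameHist V k → Fin k → V)
    (c : ℕ → Fin k → V) (r : ℕ → V) : Prop :=
  ∀ n, c (n+1) = mv (histUpTo c r (n+1))

/-- Starting from the cop configuration `cpos` (the robber then chooses any starting
vertex, and the cops move first), the cops have a strategy catching the robber: in every
play consistent with the strategy there is a time at which some cop and the robber occupy
the same vertex, all cop moves made up to and including the capturing move being legal. -/
def CopsCatchFrom {V : Type*} (G : SimpleGraph V) {k : ℕ} (cpos : Fin k → V) : Prop :=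
  ∃ mv : GameHist V k → Fin k → V,
    ∀ (c : ℕ → Fin k → V) (r : ℕ → V),
      c 0 = cpos → FollowsStrat mv c r → RobberLegal G r →
      ∃ n, ((∃ i, c n i = r n) ∧ ∀ m < n, CopStepLegal G c m) ∨
           ((∃ i, c (n+1) i = r n) ∧ ∀ m ≤ n, CopStepLegal G c m)

/-- `k` cops have a winning strategy on `G`. -/
def CopsWinWith {V : Type*} (G : SimpleGraph V) (k : ℕ) : Prop :=
  ∃ cpos : Fin k → V, CopsCatchFrom G cpos

/-- The cop number of `G`: the least `k` such that `k` cops have a winning strategy. -/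
noncomputable def copNumber {V : Type*} (G : SimpleGraph V) : ℕ :=
  sInf {k | CopsWinWith G k}

/-- Starting from the zombie configuration `zpos` and survivor position `spos`, with the
zombies to move, the zombies have a strategy catching the survivor: in every play
consistent with the strategy there is a time at which some zombie and the survivor occupy
the same vertex, all zombie moves made up to and including the capturing move being legal
(each zombie moves along an edge, strictly decreasing its distance to the survivor). -/
def ZombiesCatchFrom {V : Type*} (G : SimpleGraph V) {k : ℕ} (zpos : Fin k → V) (spos : V) :
    Prop :=
  ∃ mv : GameHist V k → Fin k → V,
    ∀ (c : ℕ → Fin k → V) (r : ℕ → V),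
      c 0 = zpos → r 0 = spos → FollowsStrat mv c r → RobberLegal G r →
      ∃ n, ((∃ i, c n i = r n) ∧ ∀ m < n, ZombieStepLegal G c r m) ∨
           ((∃ i, c (n+1) i = r n) ∧ ∀ m ≤ n, ZombieStepLegal G c r m)

/-- `k` zombies have a winning strategy on `G`: they can choose starting vertices so that
wherever the survivor starts, they catch the survivor. -/
def ZombiesWinWith {V : Type*} (G : SimpleGraph V) (k : ℕ) : Prop :=
  ∃ zpos : Fin k → V, ∀ spos : V, ZombiesCatchFrom G zpos spos

/-- The zombie number of `G`: the least `k` such that `k` zombies have a winning strategy. -/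
noncomputable def zombieNumber {V : Type*} (G : SimpleGraph V) : ℕ :=
  sInf {k | ZombiesWinWith G k}

/-- Starting from the zombie configuration `zpos` and survivor position `spos`, with the
zombies to move, the survivor has a strategy evading capture forever: in every play where
the survivor follows the strategy and the zombies move legally, the survivor's moves are
legal and no zombie ever occupies the survivor's vertex. -/
def SurvivorEvadesFrom {V : Type*} (G : SimpleGraph V) {k : ℕ} (zpos : Fin k → V) (spos : V) :
    Prop :=
  ∃ mv : GameHist V k → (Fin k → V) → V,
    ∀ (c : ℕ → Fin k → V) (r : ℕ → V),
      c 0 = zpos → r 0 = spos →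
      (∀ n, r (n+1) = mv (histUpTo c r (n+1)) (c (n+1))) →
      (∀ n, ZombieStepLegal G c r n) →
      RobberLegal G r ∧ ∀ n, (∀ i, c n i ≠ r n) ∧ (∀ i, c (n+1) i ≠ r n)

/-- Zombie-move legality in the variant where in each round the survivor moves first:
at step `n` each zombie moves along an edge, strictly decreasing its distance to the
survivor's current position `r (n+1)`. -/
def ZombieStepLegalAfter {V : Type*} (G : SimpleGraph V) {k : ℕ} (c : ℕ → Fin k → V)
    (r : ℕ → V) (n : ℕ) : Prop :=
  ∀ i, G.Adj (c n i) (c (n+1) i) ∧ G.dist (c (n+1) i) (r (n+1)) < G.dist (c n i) (r (n+1))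

/-- Starting from the zombie configuration `zpos` and survivor position `spos`, with the
survivor to move (the zombies then responding each round), the zombies have a strategy
catching the survivor. -/
def ZombiesCatchFromSurvivorToMove {V : Type*} (G : SimpleGraph V) {k : ℕ}
    (zpos : Fin k → V) (spos : V) : Prop :=
  ∃ mv : GameHist V k → V → Fin k → V,
    ∀ (c : ℕ → Fin k → V) (r : ℕ → V),
      c 0 = zpos → r 0 = spos →
      (∀ n, c (n+1) = mv (histUpTo c r (n+1)) (r (n+1))) →
      RobberLegal G r →
      ∃ n, (∃ i, c 0 i = r 0) ∨
           ((∃ i, c n i = r (n+1)) ∧ ∀ m < n, ZombieStepLegalAfter G c r m) ∨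
           ((∃ i, c (n+1) i = r (n+1)) ∧ ∀ m ≤ n, ZombieStepLegalAfter G c r m)

/-! ### The graphs `T_x`, the arm graphs `A_n`, and attaching an arm to a graph -/

/-- `|i - j| = 1 or 4` for `i j : Fin 5`, i.e. `i` and `j` are cyclically consecutive. -/
def fin5adj (i j : Fin 5) : Prop :=
  ((i : ℕ) + 1) % 5 = (j : ℕ) ∨ ((j : ℕ) + 1) % 5 = (i : ℕ)

/-- The vertices of the arm graph `A_n`: the vertex `b₂⁻¹` (`start`), the vertex `b₀ⁿ`
(`finish`), and for each copy `T_x` (`x : Fin n`) the inside vertices `a_i^x`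
(`inner x i`), the outside vertices `b_i^x` (`outer x i`) and the center `c^x`
(`center x`). -/
inductive ArmVert (n : ℕ) : Type
  | start : ArmVert n
  | finish : ArmVert n
  | inner : Fin n → Fin 5 → ArmVert n
  | outer : Fin n → Fin 5 → ArmVert n
  | center : Fin n → ArmVert n
  deriving DecidableEq

/-- One direction of the edge relation of the arm graph `A_n`. -/
def armRel (n : ℕ) : ArmVert n → ArmVert n → Prop
  | .inner x i, .inner y j => x = y ∧ fin5adj i j
  | .outer x i, .outer y j => (x = y ∧ fin5adj i j) ∨ ((x : ℕ) + 1 = (y : ℕ) ∧ (i : ℕ) = 2 ∧ (j : ℕ) = 0)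
  | .inner x i, .outer y j => x = y ∧ (i = j ∨ fin5adj i j)
  | .inner x _, .center y => x = y
  | .start, .outer y j => (y : ℕ) = 0 ∧ (j : ℕ) = 0
  | .outer x i, .finish => (x : ℕ) + 1 = n ∧ (i : ℕ) = 2
  | .start, .finish => n = 0
  | _, _ => False

/-- The arm graph `A_n`. -/
def armGraph (n : ℕ) : SimpleGraph (ArmVert n) := SimpleGraph.fromRel (armRel n)

/-- The index of the copy `T_x` containing a vertex of `A_n` (if any). -/
def copyIdx {n : ℕ} : ArmVert n → Option (Fin n)
  | .inner x _ => some x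
  | .outer x _ => some x
  | .center x => some x
  | _ => none

/-- The vertex `b₀ˣ` of `A_n` (for `x = n` this is the final vertex `b₀ⁿ`). -/
def b0 (n x : ℕ) : ArmVert n :=
  if h : x < n then ArmVert.outer ⟨x, h⟩ 0 else ArmVert.finish

/-- The vertex `b₂^{x-1}` of `A_n` (for `x = 0` this is the vertex `b₂⁻¹`). -/
def b2prev (n x : ℕ) : ArmVert n :=
  if h : 1 ≤ x ∧ x - 1 < n then ArmVert.outer ⟨x - 1, h.2⟩ 2 else ArmVert.start

/-- The vertex lies in the copy `T_x`. -/
def InCopy {W : Type*} {n : ℕ} (x : ℕ) (u : W ⊕ ArmVert n) : Prop :=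
  ∃ (a : ArmVert n) (y : Fin n), u = Sum.inr a ∧ copyIdx a = some y ∧ (y : ℕ) = x

/-- One direction of the edge relation of the graph obtained from a graph `H` and the
arm `A_n` by adding an edge from the vertex `b₂⁻¹` of `A_n` to the vertex `v` of `H`. -/
def combRel {W : Type*} (H : SimpleGraph W) (v : W) (n : ℕ) :
    (W ⊕ ArmVert n) → (W ⊕ ArmVert n) → Prop
  | Sum.inl w, Sum.inl w' => H.Adj w w'
  | Sum.inr a, Sum.inr a' => (armGraph n).Adj a a'
  | Sum.inl w, Sum.inr a => w = v ∧ a = ArmVert.start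
  | _, _ => False

/-- The graph obtained from `H` and the arm `A_n` by adding an edge from the vertex
`b₂⁻¹` of `A_n` to the vertex `v` of `H`. -/
def combGraph {W : Type*} (H : SimpleGraph W) (v : W) (n : ℕ) :
    SimpleGraph (W ⊕ ArmVert n) :=
  SimpleGraph.fromRel (combRel H v n)

/-! ### The graphs `Z_{k,m}(H)` -/

/-- The vertices of `Z_{k,m}(H)` where `H` has vertex type `W` and `p = 4*(m-k)`:
the vertices of `H`, for each vertex of `H` a path on `p` vertices, and for each
vertex of `H` `m` copies of the arm graph `A_p`. -/
abbrev ZVert (W : Type*) (m p : ℕ) : Type _ := W ⊕ (W × Fin p) ⊕ (W × Fin m × ArmVert p)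

/-- One direction of the edge relation of `Z_{k,m}(H)`. -/
def zRel {W : Type*} (H : SimpleGraph W) (m p : ℕ) : ZVert W m p → ZVert W m p → Prop
  | Sum.inl w, Sum.inl w' => H.Adj w w'
  | Sum.inl w, Sum.inr (Sum.inl (w', j)) => w = w' ∧ (j : ℕ) = 0
  | Sum.inr (Sum.inl (w, j)), Sum.inr (Sum.inl (w', j')) => w = w' ∧ (j : ℕ) + 1 = (j' : ℕ)
  | Sum.inl w, Sum.inr (Sum.inr (w', _, a)) => w = w' ∧ a = ArmVert.start
  | Sum.inr (Sum.inr (w, i, a)), Sum.inr (Sum.inr (w', i', a')) =>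
      w = w' ∧ i = i' ∧ (armGraph p).Adj a a'
  | _, _ => False

/-- The graph `Z_{k,m}(H)`: to each vertex `v` of `H` we attach (by an edge from `v` to
the first path vertex, resp. to `b₂⁻¹`) one path on `4*(m-k)` vertices and `m` copies of
the arm graph `A_{4*(m-k)}`. -/
def ZGraph {W : Type*} (H : SimpleGraph W) (k m : ℕ) :
    SimpleGraph (ZVert W m (4 * (m - k))) :=
  SimpleGraph.fromRel (zRel H m (4 * (m - k)))

/-! ### Hypercubes and block intersection graphs -/

/-- The `n`-dimensional hypercube: vertices are `Fin n → Bool`, two vertices being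
adjacent exactly when they differ in exactly one coordinate. -/
def hypercube (n : ℕ) : SimpleGraph (Fin n → Bool) :=
  SimpleGraph.fromRel fun x y => ∃ i, x i ≠ y i ∧ ∀ j, j ≠ i → x j = y j

/-- `(P, B)` is a balanced incomplete block design with parameters `(v, k, 1)`:
`P` has `v` points, every block has `k` points, and every pair of distinct points lies
in exactly one block. -/
def IsBIBD (P : Type*) (B : Finset (Finset P)) (v k : ℕ) : Prop :=
  Nat.card P = v ∧ (∀ b ∈ B, b.card = k) ∧
    ∀ p q : P, p ≠ q → ∃! b : Finset P, b ∈ B ∧ p ∈ b ∧ q ∈ b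

/-- The block intersection graph of a collection `B` of blocks: vertices are the blocks,
two distinct blocks being adjacent exactly when they intersect. -/
def blockGraph {P : Type*} (B : Finset (Finset P)) : SimpleGraph {b // b ∈ B} :=
  SimpleGraph.fromRel fun b b' => ∃ p, p ∈ b.val ∧ p ∈ b'.val

/-! ### Zombie-good positions on a graph with an attached arm -/

/-- A position (with the zombies to move) in the game on the graph obtained by attaching
the arm `A_n` to `H` at `v` is `x`-zombie-good if: the survivor is in some `T_y` with
`y ≥ x` or at `b₀ⁿ`; for some `i ≥ 1` the zombies `z_1, …, z_i` are all at `b₀ˣ`; the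
remaining zombies are in `H ∪ {b₂⁻¹} ∪ T_0 ∪ ⋯ ∪ T_{x-1}`; consecutive zombie distances
to the survivor satisfy `0 ≤ d_{j+1} - d_j ≤ 4`; and `d_m - d_1 ≥ n - x`. -/
def ZombieGood {W : Type*} (H : SimpleGraph W) (v : W) (n m x : ℕ)
    (zpos : Fin m → (W ⊕ ArmVert n)) (spos : W ⊕ ArmVert n) : Prop :=
  (∃ a : ArmVert n, spos = Sum.inr a ∧
      ((∃ y : Fin n, copyIdx a = some y ∧ x ≤ (y : ℕ)) ∨ a = ArmVert.finish)) ∧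
  (∃ i : ℕ, 1 ≤ i ∧ i ≤ m ∧
      (∀ j : Fin m, (j : ℕ) < i → zpos j = Sum.inr (b0 n x)) ∧
      (∀ j : Fin m, i ≤ (j : ℕ) →
        (∃ w, zpos j = Sum.inl w) ∨ zpos j = Sum.inr ArmVert.start ∨
          (∃ (a : ArmVert n) (y : Fin n), zpos j = Sum.inr a ∧ copyIdx a = some y ∧ (y : ℕ) < x))) ∧
  (∀ j : Fin m, ∀ h : (j : ℕ) + 1 < m,
      (combGraph H v n).dist spos (zpos j) ≤ (combGraph H v n).dist spos (zpos ⟨(j : ℕ) + 1, h⟩) ∧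
      (combGraph H v n).dist spos (zpos ⟨(j : ℕ) + 1, h⟩) - (combGraph H v n).dist spos (zpos j) ≤ 4) ∧
  (∀ hm : 1 ≤ m,
      n - x ≤ (combGraph H v n).dist spos (zpos ⟨m - 1, by omega⟩) -
        (combGraph H v n).dist spos (zpos ⟨0, by omega⟩))
/-- `u` and `v` are equal or adjacent. -/
def aE {V : Type*} (G : SimpleGraph V) (u v : V) : Prop := v = u ∨ G.Adj u v

theorem aE.symm {V : Type*} {G : SimpleGraph V} {u v : V} (h : aE G u v) : aE G v u := by
  rcases h with h | h
  · exact Or.inl h.symm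
  · exact Or.inr h.symm

/-- The cop at `c` (to move) catches the robber at `r` within `k` rounds, everybody
staying within `S`. -/
def WinK {V : Type*} (G : SimpleGraph V) (S : V → Prop) : ℕ → V → V → Prop
  | 0, c, r => c = r
  | k + 1, c, r => c = r ∨ ∃ c', S c' ∧ aE G c c' ∧
      (c' = r ∨ ∀ r', S r' → aE G r r' → WinK G S k c' r')

theorem WinK.capture {V : Type*} {G : SimpleGraph V} {S : V → Prop} {k : ℕ} {c r : V}
    (hr : S r) (h : aE G c r) : WinK G S (k + 1) c r :=
  Or.inr ⟨r, hr, h, Or.inl rfl⟩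

/-- Playing against the shadow of the robber under the fold `g`. -/
theorem winK_shadow {V : Type*} {G : SimpleGraph V} {S S' : V → Prop} {g : V → V}
    (hS : ∀ v, S v → S' v) (hg : ∀ v, S' v → S (g v))
    (hd : ∀ u w, S' u → S' w → aE G u w → aE G (g u) w)
    (ha : ∀ u w, S' u → S' w → aE G u w → aE G (g u) (g w)) :
    ∀ k c r, S' r → WinK G S k c (g r) → WinK G S' (k + 1) c r := by
  intro k
  induction k with
  | zero =>
    intro c r hr h
    have h : c = g r := h
    subst h
    exact WinK.capture hr (hd r r hr hr (Or.inl rfl))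
  | succ k ih =>
    intro c r hr h
    rcases h with h | ⟨c', hc', hcc', h⟩
    · subst h
      exact WinK.capture hr (hd r r hr hr (Or.inl rfl))
    · refine Or.inr ⟨c', hS _ hc', hcc', Or.inr ?_⟩
      intro r' hr' hrr'
      rcases h with h | h
      · subst h
        exact WinK.capture hr' (hd r r' hr hr' hrr')
      · exact ih c' r' hr' (h (g r') (hg _ hr') (ha r r' hr hr' hrr'))

/-- A ranked domination scheme makes the cop win from everywhere. -/
theorem winK_of_rank {V : Type*} {G : SimpleGraph V} (root : V) (ρ : V → ℕ) (f : V → V)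
    (h0 : ∀ v, ρ v = 0 → v = root)
    (hρ : ∀ v, ρ v ≠ 0 → ρ (f v) < ρ v)
    (hf : ∀ u w, ρ u ≠ 0 → ρ w ≤ ρ u → aE G u w → aE G (f u) w) :
    ∀ k, ∃ N, ∀ c r, ρ c ≤ k → ρ r ≤ k → WinK G (fun v => ρ v ≤ k) N c r := by
  intro k
  induction k with
  | zero =>
    refine ⟨0, fun c r hc hr => ?_⟩
    show c = r
    rw [h0 c (by omega), h0 r (by omega)]
  | succ k ih =>
    obtain ⟨N, hN⟩ := ih
    classical
    let g : V → V := fun v => if ρ v = k + 1 then f v else v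
    have hg : ∀ v, ρ v ≤ k + 1 → ρ (g v) ≤ k := by
      intro v hv
      by_cases h : ρ v = k + 1
      · have := hρ v (by omega)
        simp only [g, if_pos h]; omega
      · simp only [g, if_neg h]; omega
    have hd : ∀ u w, ρ u ≤ k + 1 → ρ w ≤ k + 1 → aE G u w → aE G (g u) w := by
      intro u w hu hw h
      by_cases h' : ρ u = k + 1
      · simp only [g, if_pos h']
        exact hf u w (by omega) (by omega) h
      · simp only [g, if_neg h']
        exact h
    have ha : ∀ u w, ρ u ≤ k + 1 → ρ w ≤ k + 1 → aE G u w → aE G (g u) (g w) := by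
      intro u w hu hw h
      have h1 := hd u w hu hw h
      exact (hd w (g u) hw (by have := hg u hu; omega) h1.symm).symm
    refine ⟨N + 2, fun c r hc hr => ?_⟩
    refine Or.inr ⟨g c, by have := hg c hc; show ρ (g c) ≤ k + 1; omega,
      (hd c c hc hc (Or.inl rfl)).symm, Or.inr ?_⟩
    intro r' hr' _
    exact winK_shadow (S := fun v => ρ v ≤ k) (S' := fun v => ρ v ≤ k + 1) (g := g)
      (fun v (hv : ρ v ≤ k) => Nat.le_succ_of_le hv) hg hd ha N (g c) r' hr'
      (hN _ _ (hg c hc) (hg r' hr'))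

/-- From bounded winning positions to a strategy. -/
theorem copsCatchFrom_of_winK {V : Type*} {G : SimpleGraph V} (S : V → Prop)
    (hS : ∀ v, S v) (N : ℕ) (h : ∀ c r, WinK G S N c r) (p : V) :
    CopsCatchFrom G (fun _ : Fin 1 => p) := by
  classical
  let d : V → V → ℕ := fun c r => sInf {k | WinK G S k c r}
  have hdW : ∀ c r, WinK G S (d c r) c r := fun c r =>
    Nat.sInf_mem (s := {k | WinK G S k c r}) ⟨N, h c r⟩
  have hdle : ∀ c r k, WinK G S k c r → d c r ≤ k := fun c r k hk => Nat.sInf_le hk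
  have key : ∀ c r, ∃ c', aE G c c' ∧
      (c = r ∨ c' = r ∨ ∀ r', aE G r r' → d c' r' < d c r) := by
    intro c r
    have hw := hdW c r
    rcases hk : d c r with _ | k
    · rw [hk] at hw
      exact ⟨c, Or.inl rfl, Or.inl hw⟩
    · rw [hk] at hw
      rcases hw with hw | ⟨c', -, hcc', hw⟩
      · exact ⟨c, Or.inl rfl, Or.inl hw⟩
      · refine ⟨c', hcc', Or.inr ?_⟩
        rcases hw with hw | hw
        · exact Or.inl hw
        · exact Or.inr fun r' hr' => Nat.lt_succ_of_le (hdle _ _ _ (hw r' (hS r') hr'))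
  choose best hb1 hb2 using key
  refine ⟨fun hist _ => match hist.getLast? with
    | some (c, r) => best (c 0) r
    | none => p, ?_⟩
  intro c r _ hfol hrob
  have hstep : ∀ n i, c (n + 1) i = best (c n 0) (r n) := by
    intro n i
    rw [hfol n]
    simp [histUpTo, List.range_succ]
  have hlegal : ∀ n, CopStepLegal G c n := by
    intro n i
    rw [hstep n i, Subsingleton.elim i 0]
    exact hb1 _ _
  by_contra hcon
  push Not at hcon
  have hdec : ∀ n, d (c (n + 1) 0) (r (n + 1)) < d (c n 0) (r n) := by
    intro n
    rcases hb2 (c n 0) (r n) with h1 | h1 | h1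
    · obtain ⟨m, _, hm⟩ := (hcon n).1 ⟨0, h1⟩
      exact absurd (hlegal m) hm
    · rw [← hstep n 0] at h1
      obtain ⟨m, _, hm⟩ := (hcon n).2 ⟨0, h1⟩
      exact absurd (hlegal m) hm
    · rw [hstep n 0]
      exact h1 _ (hrob n)
  have hbound : ∀ n, d (c n 0) (r n) + n ≤ d (c 0 0) (r 0) := by
    intro n
    induction n with
    | zero => simp
    | succ n ih => have := hdec n; omega
  have := hbound (d (c 0 0) (r 0) + 1)
  omega

/-- The rank of a vertex of the arm in the dismantling order. -/
def armRank (n : ℕ) : ArmVert n → ℕ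
  | .start => 0
  | .finish => 5 * n + 1
  | .outer x i => if i = 0 then 5 * (x : ℕ) + 1 else 5 * (x : ℕ) + 5
  | .center x => 5 * (x : ℕ) + 3
  | .inner x i =>
      if i = 0 then 5 * (x : ℕ) + 2
      else if i = 1 ∨ i = 4 then 5 * (x : ℕ) + 3 else 5 * (x : ℕ) + 4

/-- The vertex dominating a given vertex among those of smaller rank. -/
def armFold (n : ℕ) : ArmVert n → ArmVert n
  | .start => .start
  | .finish => b2prev n n
  | .outer x i => if i = 0 then b2prev n x else .inner x i
  | .center x => .inner x 0
  | .inner x i =>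
      if i = 0 then .outer x 0
      else if i = 1 ∨ i = 4 then .inner x 0 else .center x

theorem b2prev_zero (n : ℕ) : b2prev n 0 = .start := by
  simp [b2prev]

theorem b2prev_succ (n y : ℕ) (h : y < n) : b2prev n (y + 1) = .outer ⟨y, h⟩ 2 := by
  simp [b2prev, h]

theorem armRank_b2prev (n x : ℕ) : armRank n (b2prev n x) ≤ 5 * x := by
  unfold b2prev
  split_ifs with h
  · simp [armRank]; omega
  · simp [armRank]

theorem armRank_zero (n : ℕ) (v : ArmVert n) (h : armRank n v = 0) : v = .start := by
  cases v <;> simp only [armRank] at h <;> first | rfl | (split_ifs at h <;> omega) | omega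

theorem armRank_fold (n : ℕ) (v : ArmVert n) (h : armRank n v ≠ 0) :
    armRank n (armFold n v) < armRank n v := by
  cases v with
  | start => simp [armRank] at h
  | finish =>
    have := armRank_b2prev n n
    show armRank n (b2prev n n) < 5 * n + 1
    omega
  | center x => simp [armFold, armRank]
  | outer x i =>
    have := armRank_b2prev n x
    by_cases hi : i = 0
    · subst hi
      show armRank n (b2prev n x) < 5 * (x : ℕ) + 1
      omega
    · simp only [armFold, armRank, if_neg hi]
      split_ifs <;> omega
  | inner x i => fin_cases i <;> simp [armFold, armRank]

theorem armGraph_dom (n : ℕ) (u w : ArmVert n) (hu : armRank n u ≠ 0)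
    (hw : armRank n w ≤ armRank n u) (h : aE (armGraph n) u w) :
    aE (armGraph n) (armFold n u) w := by
  cases u with
  | start => simp [armRank] at hu
  | finish =>
    rcases n with _ | m
    · cases w with
      | start => simp [armFold, b2prev_zero, aE]
      | finish => simp [armFold, b2prev_zero, aE, armGraph, armRel]
      | inner y _ => exact y.elim0
      | outer y _ => exact y.elim0
      | center y => exact y.elim0
    · have e : armFold (m + 1) .finish = .outer ⟨m, by omega⟩ 2 := b2prev_succ _ _ _
      rw [e]
      cases w with
      | outer y j =>
        simp [aE, armGraph, armRel] at h
        left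
        congr 1 <;> ext <;> simp <;> omega
      | _ => simp_all [aE, armGraph, armRel]
  | center x =>
    cases w with
    | inner y j => fin_cases j <;>
        simp_all [armRank, armFold, aE, armGraph, armRel, fin5adj] <;> omega
    | _ => simp_all [armRank, armFold, aE, armGraph, armRel, fin5adj]
  | outer x i =>
    by_cases hi : i = 0
    · subst hi
      obtain ⟨x, hx⟩ := x
      rcases x with _ | x
      · have e : armFold n (.outer ⟨0, hx⟩ 0) = .start := b2prev_zero n
        rw [e]
        cases w with
        | outer y j => fin_cases j <;>
            simp_all [armRank, aE, armGraph, armRel, fin5adj, Fin.ext_iff] <;> omega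
        | inner y j => fin_cases j <;>
            simp_all [armRank, aE, armGraph, armRel, fin5adj, Fin.ext_iff]
        | _ => simp_all [armRank, aE, armGraph, armRel, fin5adj]
      · have e : armFold n (.outer ⟨x + 1, hx⟩ 0) = .outer ⟨x, by omega⟩ 2 := b2prev_succ _ _ _
        rw [e]
        cases w with
        | outer y j => fin_cases j <;>
            simp_all [armRank, aE, armGraph, armRel, fin5adj, Fin.ext_iff] <;> omega
        | inner y j => fin_cases j <;>
            simp_all [armRank, aE, armGraph, armRel, fin5adj, Fin.ext_iff] <;> omega
        | _ => simp_all [armRank, aE, armGraph, armRel, fin5adj] <;> omega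
    · cases w with
      | inner y j => fin_cases i <;> fin_cases j <;>
          simp_all [armRank, armFold, aE, armGraph, armRel, fin5adj]
      | outer y j => fin_cases i <;> fin_cases j <;>
          simp_all [armRank, armFold, aE, armGraph, armRel, fin5adj] <;> omega
      | _ => fin_cases i <;>
          simp_all [armRank, armFold, aE, armGraph, armRel, fin5adj] <;> omega
  | inner x i =>
    cases w with
    | inner y j => fin_cases i <;> fin_cases j <;>
        simp_all [armRank, armFold, aE, armGraph, armRel, fin5adj] <;> omega
    | outer y j => fin_cases i <;> fin_cases j <;>
        simp_all [armRank, armFold, aE, armGraph, armRel, fin5adj]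
    | _ => fin_cases i <;>
        simp_all [armRank, armFold, aE, armGraph, armRel, fin5adj]

theorem armGraph_cop_number (n : ℕ) :
    copNumber (armGraph n) = 1 ∧
      CopsCatchFrom (armGraph n) (fun _ : Fin 1 => ArmVert.start) := by
  have hbd : ∀ v, armRank n v ≤ 5 * n + 1 := by
    intro v
    cases v <;> simp only [armRank] <;> (try split_ifs) <;> omega
  have hcatch : CopsCatchFrom (armGraph n) (fun _ : Fin 1 => ArmVert.start) := by
    obtain ⟨N, hN⟩ := winK_of_rank (G := armGraph n) ArmVert.start (armRank n) (armFold n)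
      (armRank_zero n) (armRank_fold n) (armGraph_dom n) (5 * n + 1)
    exact copsCatchFrom_of_winK _ hbd N (fun c r => hN c r (hbd c) (hbd r)) _
  refine ⟨?_, hcatch⟩
  have h1 : (1 : ℕ) ∈ {k | CopsWinWith (armGraph n) k} := ⟨_, hcatch⟩
  have h0 : (0 : ℕ) ∉ {k | CopsWinWith (armGraph n) k} := by
    rintro ⟨cpos, mv, hmv⟩
    obtain ⟨m, h | h⟩ := hmv (fun _ => cpos) (fun _ => ArmVert.start) rfl
      (fun _ => Subsingleton.elim _ _) (fun _ => Or.inl rfl)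
    · obtain ⟨⟨i, _⟩, _⟩ := h
      exact i.elim0
    · obtain ⟨⟨i, _⟩, _⟩ := h
      exact i.elim0
  have hle : copNumber (armGraph n) ≤ 1 := Nat.sInf_le h1
  have hne : copNumber (armGraph n) ≠ 0 := by
    intro h
    apply h0
    rw [← h]
    exact Nat.sInf_mem ⟨1, h1⟩
  omega
end

section
/- Let m ≥ k ≥ 1 be integers and let H be a finite connected graph with c(H) ≤ k. Then c(Z_{k,m}(H)) ≤ k: k cops have a winning strategy on Z_{k,m}(H), obtained by first catching the robber's projection onto H (the nearest vertex of H to the robber) and then having one cop catch the robber on the path or arm on which it is trapped. -/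
open SimpleGraph

/-! ### Positional pursuit game with the robber restricted to a set -/

/-- Equal or adjacent. -/
def Near {V : Type*} (G : SimpleGraph V) (x y : V) : Prop := y = x ∨ G.Adj x y

theorem Near.nsymm {V : Type*} {G : SimpleGraph V} {x y : V} (h : Near G x y) : Near G y x := by
  rcases h with h | h
  · exact Or.inl h.symm
  · exact Or.inr h.symm

/-- Cops (to move) win from this position, the robber being restricted to `S`. -/
inductive WinOn {V : Type*} (G : SimpleGraph V) {k : ℕ} (S : Set V) : (Fin k → V) → V → Prop
  | caught (c : Fin k → V) (r : V) (i : Fin k) (h : Near G (c i) r) : WinOn G S c r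
  | step (c : Fin k → V) (r : V) (c' : Fin k → V) (hl : ∀ i, Near G (c i) (c' i))
      (h : ∀ r', r' ∈ S → Near G r r' → WinOn G S c' r') : WinOn G S c r

/-- Moving one cop onto the target. -/
theorem near_update {V : Type*} (G : SimpleGraph V) {k : ℕ} (c : Fin k → V) (i : Fin k) (v : V)
    (h : Near G (c i) v) : ∀ j, Near G (c j) (Function.update c i v j) := by
  intro j
  by_cases hj : j = i
  · subst hj; simpa using h
  · rw [Function.update_of_ne hj]; exact Or.inl rfl

/-- Folding lemma. -/
theorem WinOn.fold {V : Type*} (G : SimpleGraph V) {k : ℕ} (S S' : Set V) (f : V → V)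
    (hSS : S' ⊆ S) (hf : ∀ x ∈ S, f x ∈ S')
    (hn : ∀ x ∈ S, ∀ y ∈ S, Near G x y → Near G (f x) y)
    (c : Fin k → V) (s : V) (h : WinOn G S' c s) :
    ∀ r ∈ S, f r = s → WinOn G S c r := by
  induction h with
  | caught c s i h =>
    intro r hr hs
    subst hs
    refine WinOn.step c r _ (near_update G c i (f r) h) ?_
    intro r' hr' hrr'
    refine WinOn.caught _ _ i ?_
    rw [Function.update_self]
    exact hn r hr r' hr' hrr'
  | step c s c' hl h ih =>
    intro r hr hs
    subst hs
    refine WinOn.step c r c' hl ?_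
    intro r' hr' hrr'
    refine ih (f r') (hf r' hr') ?_ r' hr' rfl
    have h1 := hn r hr r' hr' hrr'
    exact (hn r' hr' (f r) (hSS (hf r hr)) h1.nsymm).nsymm

/-- Dismantling lemma. -/
theorem WinOn.dismantle {V : Type*} (G : SimpleGraph V) {k : ℕ} (l : V → ℕ) (f : V → V)
    (hl : ∀ x, 0 < l x → l (f x) < l x)
    (hn : ∀ x y, 0 < l x → l y ≤ l x → Near G x y → Near G (f x) y)
    (c : Fin k → V) (h0 : ∀ r, l r = 0 → WinOn G {v | l v ≤ 0} c r) (t : ℕ) :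
    ∀ r, l r ≤ t → WinOn G {v | l v ≤ t} c r := by
  induction t with
  | zero => intro r hr; exact h0 r (by omega)
  | succ t ih =>
    intro r hr
    have key : ∀ x, l x ≤ t + 1 → l (if l x ≤ t then x else f x) ≤ t := by
      intro x hx
      split_ifs with h
      · exact h
      · have := hl x (by omega); omega
    refine WinOn.fold G {v | l v ≤ t + 1} {v | l v ≤ t} (fun x => if l x ≤ t then x else f x)
      ?_ key ?_ c _ (ih _ (key r hr)) r hr rfl
    · intro x hx; exact Nat.le_succ_of_le hx
    · intro x hx y hy hxy
      simp only [Set.mem_ofPred_eq] at hx hy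
      split_ifs with h
      · exact hxy
      · exact hn x y (by omega) (by omega) hxy

/-! ### Strategies versus positional wins -/

theorem histUpTo_succ {V : Type*} {k : ℕ} (c : ℕ → Fin k → V) (r : ℕ → V) (n : ℕ) :
    histUpTo c r (n+1) = histUpTo c r n ++ [(c n, r n)] := by
  simp [histUpTo, List.range_succ]

theorem winOn_of_catch {V : Type*} (G : SimpleGraph V) {k : ℕ} (cpos : Fin k → V)
    (h : CopsCatchFrom G cpos) (r0 : V) : WinOn G Set.univ cpos r0 := by
  classical
  by_contra hw
  obtain ⟨mv, hmv⟩ := h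
  have hex : ∀ (c c' : Fin k → V) (r : V), ∃ r', Near G r r' ∧
      (¬ WinOn G Set.univ c r → (∀ i, Near G (c i) (c' i)) → ¬ WinOn G Set.univ c' r') := by
    intro c c' r
    by_contra hcon
    push Not at hcon
    have h1 := hcon r (Or.inl rfl)
    exact h1.1 (WinOn.step c r c' h1.2.1 fun r' _ hr' => (hcon r' hr').2.2)
  choose nx hnx1 hnx2 using hex
  -- state: (earlier history, current cops, current robber)
  let st : ℕ → GameHist V k × ((Fin k → V) × V) := fun n => Nat.rec ([], (cpos, r0))
    (fun _ s => (s.1 ++ [s.2], (mv (s.1 ++ [s.2]), nx s.2.1 (mv (s.1 ++ [s.2])) s.2.2))) n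
  have hst : ∀ n, st (n+1) = ((st n).1 ++ [(st n).2], (mv ((st n).1 ++ [(st n).2]),
      nx (st n).2.1 (mv ((st n).1 ++ [(st n).2])) (st n).2.2)) := fun n => rfl
  let c : ℕ → Fin k → V := fun n => (st n).2.1
  let r : ℕ → V := fun n => (st n).2.2
  have hh : ∀ n, histUpTo c r n = (st n).1 := by
    intro n
    induction n with
    | zero => rfl
    | succ n ih => rw [histUpTo_succ, ih, hst]
  have hc : ∀ n, c (n+1) = mv (histUpTo c r (n+1)) := by
    intro n
    rw [hh]
  have hr : ∀ n, r (n+1) = nx (c n) (c (n+1)) (r n) := fun n => rfl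
  have hinv : ∀ n, (∀ t < n, CopStepLegal G c t) → ¬ WinOn G Set.univ (c n) (r n) := by
    intro n
    induction n with
    | zero => intro _; exact hw
    | succ n ih =>
      intro hleg
      rw [hr]
      exact hnx2 _ _ _ (ih fun t ht => hleg t (by omega)) (hleg n (by omega))
  obtain ⟨n, ⟨⟨i, hi⟩, hleg⟩ | ⟨⟨i, hi⟩, hleg⟩⟩ := hmv c r rfl hc (fun n => by
    rw [hr]; exact hnx1 _ _ _)
  · exact hinv n hleg (WinOn.caught _ _ i (Or.inl hi.symm))
  · refine hinv n (fun t ht => hleg t (by omega)) (WinOn.caught _ _ i ?_)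
    rw [← hi]
    exact hleg n le_rfl i

/-- Cops (to move) win within `n` rounds (plus the capturing move). -/
def WinN {V : Type*} (G : SimpleGraph V) {k : ℕ} : ℕ → (Fin k → V) → V → Prop
  | 0, c, r => ∃ i, Near G (c i) r
  | n+1, c, r => WinN G n c r ∨
      ∃ c' : Fin k → V, (∀ i, Near G (c i) (c' i)) ∧ ∀ r', Near G r r' → WinN G n c' r'

theorem WinN.mono {V : Type*} (G : SimpleGraph V) {k : ℕ} {a b : ℕ} (hab : a ≤ b)
    (c : Fin k → V) (r : V) (h : WinN G a c r) : WinN G b c r := by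
  induction hab with
  | refl => exact h
  | step _ ih => exact Or.inl ih

theorem exists_winN {V : Type*} [Finite V] (G : SimpleGraph V) {k : ℕ} (c : Fin k → V) (r : V)
    (h : WinOn G Set.univ c r) : ∃ n, WinN G n c r := by
  classical
  cases nonempty_fintype V
  induction h with
  | caught c r i h => exact ⟨0, i, h⟩
  | step c r c' hl h ih =>
    have : ∀ r', ∃ n, Near G r r' → WinN G n c' r' := by
      intro r'
      by_cases hr : Near G r r'
      · obtain ⟨n, hn⟩ := ih r' trivial hr
        exact ⟨n, fun _ => hn⟩
      · exact ⟨0, fun h => absurd h hr⟩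
    choose N hN using this
    refine ⟨Finset.univ.sup N + 1, Or.inr ⟨c', hl, fun r' hr' => ?_⟩⟩
    exact WinN.mono G (Finset.le_sup (Finset.mem_univ r')) _ _ (hN r' hr')

theorem catch_of_winOn {V : Type*} [Finite V] (G : SimpleGraph V) {k : ℕ} (cpos : Fin k → V)
    (h : ∀ r, WinOn G Set.univ cpos r) : CopsCatchFrom G cpos := by
  classical
  have hex : ∀ (c : Fin k → V) (r : V), ∃ c' : Fin k → V, (∀ i, Near G (c i) (c' i)) ∧
      (WinN G 0 c r → ∃ i, c' i = r) ∧
      ∀ n, WinN G (n+1) c r → ¬ WinN G n c r → ∀ r', Near G r r' → WinN G n c' r' := by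
    intro c r
    by_cases h0 : WinN G 0 c r
    · obtain ⟨i, hi⟩ := h0
      refine ⟨_, near_update G c i r hi, fun _ => ⟨i, by simp⟩, ?_⟩
      intro n _ hn
      exact absurd (WinN.mono G (Nat.zero_le n) c r ⟨i, hi⟩) hn
    · by_cases hs : ∃ n, WinN G (n+1) c r ∧ ¬ WinN G n c r
      · obtain ⟨n, hn1, hn2⟩ := hs
        rcases hn1 with hn1' | ⟨c', hl, hc'⟩
        · exact absurd hn1' hn2
        refine ⟨c', hl, fun h => absurd h h0, ?_⟩
        intro n' h1 h2 r' hr'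
        have : n' = n := by
          rcases lt_trichotomy n' n with hlt | heq | hgt
          · exact absurd (WinN.mono G (by omega : n' + 1 ≤ n) c r h1) hn2
          · exact heq
          · exact absurd (WinN.mono G (by omega : n + 1 ≤ n') c r (Or.inr ⟨c', hl, hc'⟩)) h2
        subst this
        exact hc' r' hr'
      · exact ⟨c, fun i => Or.inl rfl, fun h => absurd h h0,
          fun n h1 h2 => absurd ⟨n, h1, h2⟩ hs⟩
  choose nx hnx1 hnx2 hnx3 using hex
  refine ⟨fun hist => match hist.getLast? with
    | none => cpos
    | some p => nx p.1 p.2, ?_⟩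
  intro c r hc0 hf hr
  have hc : ∀ n, c (n+1) = nx (c n) (r n) := by
    intro n
    rw [hf n, histUpTo_succ]
    simp
  have hleg : ∀ t, CopStepLegal G c t := by
    intro t i
    rw [hc]
    exact hnx1 _ _ i
  have key : ∀ n t, WinN G n (c t) (r t) → ∃ s i, c (s+1) i = r s := by
    intro n
    induction n with
    | zero =>
      intro t ht
      obtain ⟨i, hi⟩ := hnx2 _ _ ht
      exact ⟨t, i, by rw [hc]; exact hi⟩
    | succ n ih =>
      intro t ht
      by_cases hn : WinN G n (c t) (r t)
      · exact ih t hn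
      · refine ih (t+1) ?_
        rw [hc]
        exact hnx3 _ _ n ht hn _ (hr t)
  obtain ⟨n, hn⟩ := exists_winN G _ _ (h (r 0))
  obtain ⟨s, i, hs⟩ := key n 0 (by rw [hc0]; exact hn)
  exact ⟨s, Or.inr ⟨⟨i, hs⟩, fun t _ => hleg t⟩⟩

/-! ### The levels and parents in the arms -/

/-- Dismantling level of a vertex of the arm. -/
def armLvl {n : ℕ} : ArmVert n → ℕ
  | .start => 1
  | .finish => 5 * n + 2
  | .center x => 5 * x + 4
  | .inner x i => 5 * x + ![3, 4, 5, 5, 4] i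
  | .outer x i => 5 * x + ![2, 6, 6, 6, 6] i

/-- The vertex onto which a vertex of the arm is folded. -/
def armPar {n : ℕ} : ArmVert n → ArmVert n
  | .start => .start
  | .finish => b2prev n n
  | .center x => .inner x 0
  | .inner x i => ![.outer x 0, .inner x 0, .center x, .center x, .inner x 0] i
  | .outer x i => ![b2prev n x, .inner x 1, .inner x 2, .inner x 3, .inner x 4] i

theorem armLvl_pos {n : ℕ} (a : ArmVert n) : 0 < armLvl a := by
  cases a with
  | inner x i => fin_cases i <;> simp [armLvl]
  | outer x i => fin_cases i <;> simp [armLvl]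
  | _ => simp [armLvl]

theorem armLvl_b2prev (n x : ℕ) : armLvl (b2prev n x) < 5 * x + 2 := by
  unfold b2prev
  split_ifs with h
  · simp [armLvl]; omega
  · simp [armLvl]

theorem armLvl_par {n : ℕ} (a : ArmVert n) (ha : a ≠ .start) : armLvl (armPar a) < armLvl a := by
  cases a with
  | start => exact absurd rfl ha
  | finish => exact armLvl_b2prev n n
  | center x => simp [armLvl, armPar]
  | inner x i => fin_cases i <;> simp [armLvl, armPar]
  | outer x i =>
    fin_cases i
    · simpa [armPar, armLvl] using armLvl_b2prev n x
    all_goals simp [armLvl, armPar]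

theorem armNear_par {n : ℕ} (a : ArmVert n) (ha : a ≠ .start) :
    Near (armGraph n) (armPar a) a := by
  cases a with
  | start => exact absurd rfl ha
  | finish =>
    right
    simp only [armPar, b2prev]
    split_ifs with h
    · simp [armGraph, armRel]; omega
    · simp [armGraph, armRel]; omega
  | center x => right; simp [armPar, armGraph, armRel]
  | inner x i => right; fin_cases i <;> simp [armPar, armGraph, armRel, fin5adj]
  | outer x i =>
    right
    fin_cases i
    · simp only [armPar, b2prev, Fin.zero_eta, Matrix.cons_val_zero]
      split_ifs with h
      · simp [armGraph, armRel]
        omega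
      · simp [armGraph, armRel]; omega
    all_goals simp [armPar, armGraph, armRel, fin5adj]

theorem armNear_b2prev {n : ℕ} (x : ℕ) (v y : ArmVert n)
    (hv : v = .finish ∧ x = n ∨ ∃ h : x < n, v = .outer ⟨x, h⟩ 0)
    (hl : armLvl y < 5 * x + 2) (h : (armGraph n).Adj v y) : y = b2prev n x := by
  simp only [armGraph, SimpleGraph.fromRel_adj] at h
  obtain ⟨hne, h⟩ := h
  unfold b2prev
  rcases hv with ⟨rfl, rfl⟩ | ⟨hx, rfl⟩
  · cases y <;> simp_all [armRel]
    rename_i z j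
    obtain ⟨z, hz⟩ := z
    fin_cases j <;> grind
  · cases y with
    | start =>
      simp [armRel] at h
      simp [h]
    | finish => simp [armLvl] at hl; omega
    | center z => simp [armRel] at h
    | inner z j =>
      fin_cases j <;> simp [armRel, armLvl, fin5adj] at h hl <;> subst h <;> simp at hl
    | outer z j =>
      obtain ⟨z, hz⟩ := z
      fin_cases j <;> simp [armRel, armLvl, fin5adj] at h hl <;> grind

theorem armNear {n : ℕ} (a y : ArmVert n) (ha : a ≠ .start) (hl : armLvl y ≤ armLvl a)
    (h : Near (armGraph n) a y) : Near (armGraph n) (armPar a) y := by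
  rcases h with rfl | h
  · exact armNear_par _ ha
  cases a with
  | start => exact absurd rfl ha
  | finish =>
    left
    refine armNear_b2prev n .finish y (Or.inl ⟨rfl, rfl⟩) ?_ h
    cases y with
    | outer z j =>
      have := z.2
      fin_cases j <;> simp [armLvl] at hl ⊢ <;> omega
    | start => simp [armLvl]
    | _ => simp [armGraph, armRel] at h
  | center x =>
    cases y with
    | inner z j =>
      simp [armGraph, armRel] at h
      subst h
      fin_cases j <;> simp [armLvl] at hl <;>
        simp [Near, armPar, armGraph, armRel, fin5adj]
    | _ => simp [armGraph, armRel] at h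
  | inner x i =>
    cases y with
    | inner z j =>
      simp [armGraph, armRel] at h
      have hz : x = z := by rcases h.2 with h | h <;> simp [h.1]
      subst hz
      fin_cases i <;> fin_cases j <;> simp [armLvl, fin5adj] at h hl <;>
        simp [Near, armPar, armGraph, armRel, fin5adj]
    | outer z j =>
      simp [armGraph, armRel] at h
      obtain ⟨hz, h⟩ := h
      subst hz
      fin_cases i <;> fin_cases j <;> simp [armLvl, fin5adj] at h hl <;>
        simp [Near, armPar, armGraph, armRel, fin5adj]
    | center z =>
      simp [armGraph, armRel] at h
      subst h
      fin_cases i <;> simp [armLvl] at hl <;>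
        simp [Near, armPar, armGraph, armRel, fin5adj]
    | _ => simp [armGraph, armRel] at h
  | outer x i =>
    by_cases hi : i = 0
    · subst hi
      left
      refine armNear_b2prev x (.outer x 0) y (Or.inr ⟨x.2, rfl⟩) ?_ h
      refine lt_of_le_of_ne (by simpa [armLvl] using hl) ?_
      intro he
      cases y with
      | start => simp [armLvl] at he
      | finish => simp [armLvl] at he; omega
      | center z => simp [armLvl] at he; omega
      | inner z j => fin_cases j <;> simp [armLvl] at he <;> omega
      | outer z j =>
        fin_cases j <;> simp [armLvl] at he
        · simp [← Fin.ext_iff] at he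
          subst he
          simp at h
        all_goals omega
    · cases y with
      | start => simp [armGraph, armRel] at h; omega
      | finish => have := x.2; fin_cases i <;> simp [armLvl] at hl hi <;> omega
      | center z => simp [armGraph, armRel] at h
      | inner z j =>
        simp [armGraph, armRel] at h
        obtain ⟨hz, h⟩ := h
        subst hz
        fin_cases i <;> fin_cases j <;> simp [armLvl, fin5adj] at h hl hi <;>
          simp [Near, armPar, armGraph, armRel, fin5adj]
      | outer z j =>
        have hz : x = z := by
          simp [armGraph, armRel] at h
          rcases h.2 with (h | h) | (h | h)
          · exact h.1
          · obtain ⟨h1, h2, h3⟩ := h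
            have h2' : i = 2 := Fin.ext h2
            subst h2' h3
            simp [armLvl] at hl; omega
          · exact h.1.symm
          · exact absurd h.2.2 hi
        subst hz
        simp [armGraph, armRel] at h
        fin_cases i <;> fin_cases j <;> simp [armLvl, fin5adj] at h hl hi <;>
          simp [Near, armPar, armGraph, armRel, fin5adj]

/-! ### The levels and parents in the whole graph -/

/-- Dismantling level in `Z`. -/
def zLvl {W : Type*} {m p : ℕ} : ZVert W m p → ℕ
  | .inl _ => 0
  | .inr (.inl (_, j)) => j + 1
  | .inr (.inr (_, _, a)) => armLvl a

/-- Folding map in `Z`. -/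
def zPar {W : Type*} {m p : ℕ} : ZVert W m p → ZVert W m p
  | .inl w => .inl w
  | .inr (.inl (w, j)) => if (j : ℕ) = 0 then .inl w else .inr (.inl (w, ⟨j - 1, by omega⟩))
  | .inr (.inr (w, i, a)) => if a = .start then .inl w else .inr (.inr (w, i, armPar a))

theorem zLvl_par {W : Type*} {m p : ℕ} (x : ZVert W m p) (hx : 0 < zLvl x) :
    zLvl (zPar x) < zLvl x := by
  rcases x with w | ⟨w, j⟩ | ⟨w, i, a⟩
  · simp [zLvl] at hx
  · simp only [zPar]
    split_ifs with h
    · simp [zLvl]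
    · simp [zLvl]; omega
  · simp only [zPar]
    split_ifs with h
    · simp [zLvl, armLvl_pos]
    · exact armLvl_par a h

theorem zNear {W : Type*} (H : SimpleGraph W) (m p : ℕ) (x y : ZVert W m p) (hx : 0 < zLvl x)
    (hl : zLvl y ≤ zLvl x) (h : Near (SimpleGraph.fromRel (zRel H m p)) x y) :
    Near (SimpleGraph.fromRel (zRel H m p)) (zPar x) y := by
  rcases x with w | ⟨w, j⟩ | ⟨w, i, a⟩
  · simp [zLvl] at hx
  · rcases y with w' | ⟨w', j'⟩ | ⟨w', i', a'⟩
    · simp [Near, zRel] at h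
      simp [Near, zPar, h]
    · have hw : w' = w := by
        simp [Near, zRel] at h; grind
      subst hw
      have hj : j' = j ∨ (j' : ℕ) + 1 = j := by
        simp [Near, zRel, zLvl] at h hl
        rcases h with h | ⟨_, h | h⟩
        · exact Or.inl h
        · omega
        · exact Or.inr h
      simp only [zPar]
      split_ifs with h0
      · right
        simp [zRel]; grind
      · rcases hj with rfl | hj
        · right
          simp [zRel]
          refine ⟨?_, by omega⟩
          intro h; have := congrArg Fin.val h; simp at this; omega
        · left
          simp [Fin.ext_iff]; omega
    · simp [Near, zRel] at h
  · rcases y with w' | ⟨w', j'⟩ | ⟨w', i', a'⟩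
    · simp [Near, zRel] at h
      simp [Near, zPar, h]
    · simp [Near, zRel] at h
    · have hw : w' = w ∧ i' = i ∧ Near (armGraph p) a a' := by
        simp [Near, zRel] at h
        rcases h with h | ⟨_, h | h⟩
        · exact ⟨h.1, h.2.1, Or.inl h.2.2⟩
        · exact ⟨h.1.symm, h.2.1.symm, Or.inr h.2.2⟩
        · exact ⟨h.1, h.2.1, Or.inr h.2.2.symm⟩
      obtain ⟨rfl, rfl, hN⟩ := hw
      simp only [zPar]
      simp only [zLvl] at hl
      split_ifs with h0
      · subst h0
        have : a' = .start := by
          cases a' with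
          | start => rfl
          | finish => simp [armLvl] at hl
          | center x => simp [armLvl] at hl
          | inner x i => fin_cases i <;> simp [armLvl] at hl
          | outer x i => fin_cases i <;> simp [armLvl] at hl
        right
        simp [zRel, this]
      · rcases armNear a a' h0 hl hN with h1 | h1
        · left; rw [h1]
        · right
          simp [zRel, h1, h1.ne]

theorem winOn_base {W : Type*} (H : SimpleGraph W) (m p : ℕ) {j k : ℕ} (hjk : j ≤ k)
    (c : Fin j → W) (r : W) (h : WinOn H Set.univ c r) :
    ∀ d : Fin k → ZVert W m p, (∀ i, d (Fin.castLE hjk i) = .inl (c i)) →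
      WinOn (SimpleGraph.fromRel (zRel H m p)) {v | zLvl v ≤ 0} d (.inl r) := by
  have emb : ∀ x y : W, Near H x y →
      Near (SimpleGraph.fromRel (zRel H m p)) (.inl x) (.inl y) := by
    rintro x y (h | h)
    · exact Or.inl (by rw [h])
    · right
      simp [zRel, h, h.ne]
  induction h with
  | caught c r i h =>
    intro d hd
    refine WinOn.caught _ _ (Fin.castLE hjk i) ?_
    rw [hd]
    exact emb _ _ h
  | step c r c' hl h ih =>
    intro d hd
    refine WinOn.step _ _ (fun i => if hi : (i : ℕ) < j then .inl (c' ⟨i, hi⟩) else d i) ?_ ?_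
    · intro i
      split_ifs with hi
      · have : d i = .inl (c ⟨i, hi⟩) := hd ⟨i, hi⟩
        rw [this]
        exact emb _ _ (hl _)
      · exact Or.inl rfl
    · rintro (r' | ⟨w, q⟩ | ⟨w, q, a⟩) hr' hN
      · refine ih r' trivial ?_ _ ?_
        · rcases hN with hN | hN
          · exact Or.inl (Sum.inl.inj hN)
          · right
            simp [zRel] at hN
            rcases hN.2 with h | h
            · exact h
            · exact h.symm
        · intro i
          simp
      · simp [zLvl] at hr'
      · have := armLvl_pos a
        simp [zLvl] at hr'
        omega

instance ArmVert.instFinite (n : ℕ) : Finite (ArmVert n) := by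
  let f : ArmVert n → Unit ⊕ Unit ⊕ (Fin n × Fin 5) ⊕ (Fin n × Fin 5) ⊕ Fin n := fun a =>
    match a with
    | .start => .inl ()
    | .finish => .inr (.inl ())
    | .inner x i => .inr (.inr (.inl (x, i)))
    | .outer x i => .inr (.inr (.inr (.inl (x, i))))
    | .center x => .inr (.inr (.inr (.inr x)))
  refine Finite.of_injective f ?_
  intro a b h
  cases a <;> cases b <;> simp_all [f]

theorem copsWinWith_copNumber {W : Type*} [Fintype W] (H : SimpleGraph W) :
    CopsWinWith H (copNumber H) := by
  have hne : {k | CopsWinWith H k}.Nonempty := by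
    refine ⟨Fintype.card W, (Fintype.equivFin W).symm, fun _ => (Fintype.equivFin W).symm, ?_⟩
    intro c r h0 _ _
    refine ⟨0, Or.inl ⟨⟨Fintype.equivFin W (r 0), ?_⟩, by simp⟩⟩
    rw [h0]; simp
  exact Nat.sInf_mem hne

/-- Let `m ≥ k ≥ 1` and let `H` be a finite connected graph with `c(H) ≤ k`.  Then
`k` cops have a winning strategy on `Z_{k,m}(H)`, so `c(Z_{k,m}(H)) ≤ k`. -/
theorem ZGraph_cop_number_le {W : Type*} [Fintype W] (H : SimpleGraph W)
    (hH : H.Connected) (k m : ℕ) (hk : 1 ≤ k) (hkm : k ≤ m)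
    (hcop : copNumber H ≤ k) :
    CopsWinWith (ZGraph H k m) k ∧ copNumber (ZGraph H k m) ≤ k := by
  have key : CopsWinWith (ZGraph H k m) k := by
    obtain ⟨cpos, hc⟩ := copsWinWith_copNumber H
    obtain ⟨w0⟩ := hH.nonempty
    let d : Fin k → ZVert W m (4 * (m - k)) := fun i =>
      if hi : (i : ℕ) < copNumber H then .inl (cpos ⟨i, hi⟩) else .inl w0
    refine ⟨d, catch_of_winOn _ d fun r => ?_⟩
    have h0 : ∀ r : ZVert W m (4 * (m - k)), zLvl r = 0 →
        WinOn (ZGraph H k m) {v | zLvl v ≤ 0} d r := by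
      rintro (r | ⟨w, q⟩ | ⟨w, q, a⟩) hr
      · refine winOn_base H m _ hcop cpos r (winOn_of_catch H cpos hc r) d ?_
        intro i
        simp [d]
      · simp [zLvl] at hr
      · have := armLvl_pos a
        simp [zLvl] at hr
        omega
    have h1 := fun t => WinOn.dismantle (ZGraph H k m) zLvl zPar zLvl_par
      (zNear H m (4 * (m - k))) d h0 t
    have hfin : Finite (ZVert W m (4 * (m - k))) := inferInstance
    cases nonempty_fintype (ZVert W m (4 * (m - k)))
    have hmax : ∀ v : ZVert W m (4 * (m - k)), zLvl v ≤ Finset.univ.sup zLvl :=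
      fun v => Finset.le_sup (Finset.mem_univ v)
    have h2 := h1 (Finset.univ.sup zLvl) r (hmax r)
    have hS : {v : ZVert W m (4 * (m - k)) | zLvl v ≤ Finset.univ.sup zLvl} = Set.univ :=
      Set.eq_univ_of_forall hmax
    rwa [hS] at h2
  exact ⟨key, Nat.sInf_le key⟩
end

section
/- Let m ≥ k ≥ 1 be integers and let H be a finite connected graph with cop number c(H) ≥ k and diameter at most 2. Then m − 1 zombies do not have a winning strategy on Z_{k,m}(H); that is, z(Z_{k,m}(H)) ≥ m. -/
open SimpleGraph

/-! ### General game lemmas -/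

/-- A set of positions closed under play shows that the zombies do not win. -/
theorem not_catch_of_safe {V : Type*} (G : SimpleGraph V) {j : ℕ}
    (S : (Fin j → V) → V → Prop)
    (hne : ∀ z s, S z s → ∀ i, z i ≠ s)
    (hstep : ∀ z s, S z s → ∀ z' : Fin j → V,
      (∀ i, G.Adj (z i) (z' i) ∧ G.dist (z' i) s < G.dist (z i) s) →
      (∀ i, z' i ≠ s) ∧ ∃ s', (s' = s ∨ G.Adj s s') ∧ S z' s')
    (zpos : Fin j → V) (spos : V) (h0 : S zpos spos) : ¬ ZombiesCatchFrom G zpos spos := by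
  classical
  rintro ⟨mv, hmv⟩
  have hresp : ∃ resp : (Fin j → V) → V → (Fin j → V) → V,
      (∀ z s z', resp z s z' = s ∨ G.Adj s (resp z s z')) ∧
      ∀ z s z', S z s →
        (∀ i, G.Adj (z i) (z' i) ∧ G.dist (z' i) s < G.dist (z i) s) →
        S z' (resp z s z') := by
    refine ⟨fun z s z' => if h : S z s ∧
        (∀ i, G.Adj (z i) (z' i) ∧ G.dist (z' i) s < G.dist (z i) s) then
        (hstep z s h.1 z' h.2).2.choose else s, ?_, ?_⟩
    · intro z s z'
      dsimp only
      split_ifs with h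
      · exact (hstep z s h.1 z' h.2).2.choose_spec.1
      · exact Or.inl rfl
    · intro z s z' h1 h2
      dsimp only
      rw [dif_pos ⟨h1, h2⟩]
      exact (hstep z s h1 z' h2).2.choose_spec.2
  obtain ⟨resp, hleg, hS⟩ := hresp
  let nxt : GameHist V j × (Fin j → V) × V → GameHist V j × (Fin j → V) × V := fun q =>
    (q.1 ++ [(q.2.1, q.2.2)], mv (q.1 ++ [(q.2.1, q.2.2)]),
      resp q.2.1 q.2.2 (mv (q.1 ++ [(q.2.1, q.2.2)])))
  let seq : ℕ → GameHist V j × (Fin j → V) × V := fun n =>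
    Nat.rec (([] : GameHist V j), zpos, spos) (fun _ q => nxt q) n
  have seq_succ : ∀ n, seq (n+1) = nxt (seq n) := fun n => rfl
  let c : ℕ → Fin j → V := fun n => (seq n).2.1
  let r : ℕ → V := fun n => (seq n).2.2
  have hhist : ∀ n, (seq n).1 = histUpTo c r n := by
    intro n
    induction n with
    | zero => rfl
    | succ n ih =>
      rw [seq_succ]
      simp only [nxt, ih, histUpTo, List.range_succ, List.map_append, List.map_cons, List.map_nil]
      rfl
  have hc : ∀ n, c (n+1) = mv (histUpTo c r (n+1)) := by
    intro n
    rw [← hhist]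
  have hr : ∀ n, r (n+1) = resp (c n) (r n) (c (n+1)) := fun n => rfl
  have hsafe : ∀ n, (∀ m < n, ZombieStepLegal G c r m) → S (c n) (r n) := by
    intro n
    induction n with
    | zero => intro _; exact h0
    | succ n ih =>
      intro h
      rw [hr]
      exact hS _ _ _ (ih fun m hm => h m (by omega)) (h n (by omega))
  obtain ⟨n, h | h⟩ := hmv c r rfl rfl hc (fun n => hleg _ _ _)
  · obtain ⟨⟨i, hi⟩, hl⟩ := h
    exact hne _ _ (hsafe n hl) i hi
  · obtain ⟨⟨i, hi⟩, hl⟩ := h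
    exact (hstep _ _ (hsafe n fun m hm => hl m (by omega)) _ (hl n le_rfl)).1 i hi

/-- The cops can catch the robber in at most `n` moves. -/
def CopW {V : Type*} (H : SimpleGraph V) {q : ℕ} : ℕ → (Fin q → V) → V → Prop
  | 0, c, r => ∃ i, c i = r
  | n+1, c, r => CopW H n c r ∨ ∃ c' : Fin q → V, (∀ i, c' i = c i ∨ H.Adj (c i) (c' i)) ∧
      ((∃ i, c' i = r) ∨ ∀ r', (r' = r ∨ H.Adj r r') → CopW H n c' r')

theorem CopW.mono {V : Type*} {H : SimpleGraph V} {q : ℕ} {n n' : ℕ} (h : n ≤ n')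
    {c : Fin q → V} {r : V} (hw : CopW H n c r) : CopW H n' c r := by
  induction h with
  | refl => exact hw
  | step _ ih => exact Or.inl ih

/-- Finitely many cop-win positions have a common bound. -/
theorem CopW.bound {V : Type*} [Fintype V] {H : SimpleGraph V} {q : ℕ}
    {c : Fin q → V} (p : V → Prop) (h : ∀ r, p r → ∃ n, CopW H n c r) :
    ∃ n, ∀ r, p r → CopW H n c r := by
  classical
  choose! f hf using h
  refine ⟨Finset.univ.sup f, fun r hr => (hf r hr).mono (Finset.le_sup (Finset.mem_univ r))⟩

theorem copsCatchFrom_of_CopW {V : Type*} {H : SimpleGraph V} {q : ℕ}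
    (cpos : Fin q → V) (h : ∀ r, ∃ n, CopW H n cpos r) : CopsCatchFrom H cpos := by
  classical
  have hst : ∃ st : (Fin q → V) → V → Fin q → V, ∀ c r n, CopW H n c r →
      (∃ i, c i = r) ∨ ((∀ i, st c r i = c i ∨ H.Adj (c i) (st c r i)) ∧
        ((∃ i, st c r i = r) ∨ ∃ n' < n, ∀ r', (r' = r ∨ H.Adj r r') →
          CopW H n' (st c r) r')) := by
    have key : ∀ (c : Fin q → V) (r : V), ∃ c' : Fin q → V, ∀ n, CopW H n c r →
      (∃ i, c i = r) ∨ ((∀ i, c' i = c i ∨ H.Adj (c i) (c' i)) ∧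
        ((∃ i, c' i = r) ∨ ∃ n' < n, ∀ r', (r' = r ∨ H.Adj r r') →
          CopW H n' c' r')) := by
      intro c r
      by_cases hex : ∃ n, CopW H n c r
      · have hm : ∀ n, CopW H n c r → Nat.find hex ≤ n := fun n hn => Nat.find_min' hex hn
        have hs := Nat.find_spec hex
        have hmin : ∀ n, n < Nat.find hex → ¬ CopW H n c r := fun n hn => Nat.find_min hex hn
        generalize Nat.find hex = N at hm hs hmin
        cases N with
        | zero => exact ⟨c, fun n _ => Or.inl hs⟩
        | succ N =>
          rcases hs with hs | ⟨c', hc', hs⟩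
          · exact absurd hs (hmin N (by omega))
          · refine ⟨c', fun n hn => Or.inr ⟨hc', hs.imp id fun h => ⟨N, ?_, h⟩⟩⟩
            have := hm n hn
            omega
      · exact ⟨c, fun n hn => absurd ⟨n, hn⟩ hex⟩
    choose st hst using key
    exact ⟨st, hst⟩
  obtain ⟨st, hst⟩ := hst
  refine ⟨fun h => match h.getLast? with
    | some (c, r) => st c r
    | none => cpos, ?_⟩
  intro c r h0 hf hr
  have hstep : ∀ n, c (n+1) = st (c n) (r n) := by
    intro n
    rw [hf n]
    simp [histUpTo, List.range_succ]
  have main : ∀ N t, (∀ t' < t, CopStepLegal H c t') → CopW H N (c t) (r t) →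
      ∃ n, ((∃ i, c n i = r n) ∧ ∀ m < n, CopStepLegal H c m) ∨
           ((∃ i, c (n+1) i = r n) ∧ ∀ m ≤ n, CopStepLegal H c m) := by
    intro N
    induction N using Nat.strong_induction_on with
    | _ N ih =>
      intro t hl hw
      rcases hst _ _ _ hw with hc | ⟨hleg, hw'⟩
      · exact ⟨t, Or.inl ⟨hc, hl⟩⟩
      · rw [← hstep] at hleg hw'
        have hl' : ∀ t' < t+1, CopStepLegal H c t' := by
          intro t' ht'
          rcases Nat.lt_succ_iff_lt_or_eq.1 ht' with h | h
          · exact hl t' h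
          · rw [h]; exact hleg
        rcases hw' with hc | ⟨n', hn', hw'⟩
        · exact ⟨t, Or.inr ⟨hc, fun m hm => hl' m (by omega)⟩⟩
        · exact ih n' hn' (t+1) hl' (hw' _ (hr t))
  obtain ⟨N, hN⟩ := h (r 0)
  exact main N 0 (by omega) (by rw [h0]; exact hN)

/-- If `q` cops do not win, the robber has a closed set of safe positions. -/
theorem exists_safe_of_not_copsWin {V : Type*} [Fintype V] {H : SimpleGraph V} {q : ℕ}
    (h : ¬ CopsWinWith H q) :
    ∃ S : (Fin q → V) → V → Prop, (∀ c, ∃ r, S c r) ∧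
      ∀ c r, S c r → ∀ c' : Fin q → V, (∀ i, c' i = c i ∨ H.Adj (c i) (c' i)) →
        (∀ i, c' i ≠ r) ∧ ∃ r', (r' = r ∨ H.Adj r r') ∧ S c' r' := by
  refine ⟨fun c r => ∀ n, ¬ CopW H n c r, ?_, ?_⟩
  · intro c
    by_contra hc
    push Not at hc
    exact h ⟨c, copsCatchFrom_of_CopW c hc⟩
  · intro c r hS c' hc'
    constructor
    · intro i hi
      exact hS 1 (Or.inr ⟨c', hc', Or.inl ⟨i, hi⟩⟩)
    · by_contra hcon
      push Not at hcon
      obtain ⟨n, hn⟩ := CopW.bound (H := H) (c := c') (fun r' => r' = r ∨ H.Adj r r') hcon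
      exact hS (n+1) (Or.inr ⟨c', hc', Or.inr hn⟩)

/-- Distances through a cut vertex. -/
theorem dist_cut {V : Type*} {G : SimpleGraph V} (hG : G.Connected) (B : V → Prop) (q : V)
    (hB : ∀ u w, B u → G.Adj u w → B w ∨ w = q) {u s : V} (hu : B u ∨ u = q) (hs : ¬ B s) :
    G.dist u s = G.dist u q + G.dist q s := by
  apply le_antisymm hG.dist_triangle
  obtain ⟨p, hp⟩ := hG.exists_walk_length_eq_dist u s
  rw [← hp]
  clear hp
  induction p with
  | nil =>
    rcases hu with h | h
    · exact absurd h hs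
    · subst h; simp
  | @cons a b c hab p ih =>
    rcases hu with h | h
    · have h1 := ih (hB _ _ h hab) hs
      have h2 : G.dist a q ≤ G.dist a b + G.dist b q := hG.dist_triangle
      have h3 : G.dist a b = 1 := SimpleGraph.dist_eq_one_iff_adj.2 hab
      rw [SimpleGraph.Walk.length_cons]
      omega
    · subst h
      have := SimpleGraph.dist_le (SimpleGraph.Walk.cons hab p)
      simp only [SimpleGraph.dist_self]
      omega

/-- A zombie behind a cut vertex approaches it. -/
theorem move_cut {V : Type*} {G : SimpleGraph V} (hG : G.Connected) (B : V → Prop) (q : V)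
    (hB : ∀ u w, B u → G.Adj u w → B w ∨ w = q) {u u' s : V} (hu : B u) (hs : ¬ B s)
    (hadj : G.Adj u u') (hlt : G.dist u' s < G.dist u s) :
    (B u' ∨ u' = q) ∧ G.dist u' q + 1 = G.dist u q := by
  have h1 := hB _ _ hu hadj
  have h2 := dist_cut hG B q hB h1 hs
  have h3 := dist_cut hG B q hB (Or.inl hu) hs
  have h4 : G.dist u q ≤ G.dist u u' + G.dist u' q := hG.dist_triangle
  have h5 : G.dist u u' = 1 := SimpleGraph.dist_eq_one_iff_adj.2 hadj
  exact ⟨h1, by omega⟩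

/-! ### The gap potential -/

/-- The potential of the gaps is at most `B`. -/
def Pot {j : ℕ} (g : Fin j → ℕ) (B : ℕ) : Prop :=
  ∃ s, s + 4 * (Finset.univ.filter fun i => s < g i).card ≤ B

theorem Pot.mono {j : ℕ} {g g' : Fin j → ℕ} {B : ℕ} (h : Pot g B) (hg : ∀ i, g' i ≤ g i) :
    Pot g' B := by
  obtain ⟨s, hs⟩ := h
  refine ⟨s, le_trans ?_ hs⟩
  gcongr with i
  exact hg i

theorem Pot.sub5 {j : ℕ} {g : Fin j → ℕ} {B : ℕ} (h : Pot g B) :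
    Pot (fun i => g i - 5) B := by
  obtain ⟨s, hs⟩ := h
  refine ⟨s - 5, le_trans ?_ hs⟩
  have : (Finset.univ.filter fun i => s - 5 < g i - 5).card
      ≤ (Finset.univ.filter fun i => s < g i).card := by
    apply Finset.card_le_card
    intro i
    simp only [Finset.mem_filter, Finset.mem_univ, true_and]
    omega
  dsimp only
  omega

theorem Pot.sub1 {j : ℕ} {g : Fin j → ℕ} {B : ℕ} (h : Pot g B)
    (hg : ∃ i, 1 ≤ g i ∧ g i ≤ 4) : 1 ≤ B ∧ Pot (fun i => g i - 1) (B - 1) := by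
  have key : ∃ s, 1 ≤ s ∧ s + 4 * (Finset.univ.filter fun i => s < g i).card ≤ B := by
    obtain ⟨s, hs⟩ := h
    rcases Nat.eq_zero_or_pos s with h0 | h0
    · subst h0
      obtain ⟨i, hi1, hi4⟩ := hg
      refine ⟨4, by omega, ?_⟩
      have : (Finset.univ.filter fun i => 4 < g i).card
          < (Finset.univ.filter fun i => 0 < g i).card := by
        apply Finset.card_lt_card
        rw [Finset.ssubset_iff_of_subset]
        · exact ⟨i, by simp; omega, by simp; omega⟩
        · intro a
          simp only [Finset.mem_filter, Finset.mem_univ, true_and]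
          omega
      omega
    · exact ⟨s, h0, hs⟩
  obtain ⟨s, h1, hs⟩ := key
  refine ⟨by omega, s - 1, ?_⟩
  have : (Finset.univ.filter fun i => s - 1 < g i - 1) = Finset.univ.filter fun i => s < g i := by
    ext i
    simp only [Finset.mem_filter, Finset.mem_univ, true_and]
    omega
  rw [this]
  omega

theorem Pot.of_card {j : ℕ} {g : Fin j → ℕ} {B s k : ℕ} (A : Finset (Fin j)) (hA : k ≤ A.card)
    (hg : ∀ i ∈ A, g i ≤ s) (hB : s + 4 * (j - k) ≤ B) : Pot g B := by
  refine ⟨s, le_trans ?_ hB⟩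
  have : (Finset.univ.filter fun i => s < g i).card ≤ j - k := by
    have h1 : (Finset.univ.filter fun i => s < g i) ⊆ Aᶜ := by
      intro i hi
      rw [Finset.mem_compl]
      intro hiA
      have := hg i hiA
      simp at hi
      omega
    have h2 := Finset.card_le_card h1
    rw [Finset.card_compl, Fintype.card_fin] at h2
    omega
  omega


/-! ### Structure of the arm graph -/

/-- The level of a vertex in the arm. -/
def alev {n : ℕ} : ArmVert n → ℕ
  | .start => 0
  | .finish => n + 1
  | .inner x _ => x + 1
  | .outer x _ => x + 1
  | .center x => x + 1

theorem arm_adj_iff {n : ℕ} (a b : ArmVert n) :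
    (armGraph n).Adj a b ↔ a ≠ b ∧ (armRel n a b ∨ armRel n b a) := Iff.rfl

theorem arm_adj_lev {n : ℕ} {x : ℕ} (hx : x < n) {a b : ArmVert n} (h : (armGraph n).Adj a b)
    (ha : alev a ≤ x) (hb : x < alev b) : b = .outer ⟨x, hx⟩ 0 := by
  rw [arm_adj_iff] at h
  obtain ⟨-, h⟩ := h
  cases a <;> cases b <;> simp_all [armRel, alev] <;> grind

theorem fin5adj_add4 : ∀ j : Fin 5, fin5adj j (j + 4) := by
  unfold fin5adj; decide

theorem fin5adj_add1 : ∀ j : Fin 5, fin5adj j (j + 1) := by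
  unfold fin5adj; decide

theorem fin5adj_common3 : ∀ j i : Fin 5, (i = j ∨ fin5adj i j ∨ fin5adj j i) →
    (i = j + 3 ∨ fin5adj i (j + 3) ∨ fin5adj (j + 3) i) → i = j + 4 := by
  unfold fin5adj; decide

theorem fin5adj_common2 : ∀ j i : Fin 5, (i = j ∨ fin5adj i j ∨ fin5adj j i) →
    (i = j + 2 ∨ fin5adj i (j + 2) ∨ fin5adj (j + 2) i) → i = j + 1 := by
  unfold fin5adj; decide

/-- Index `j` of copy `x` in the arm. -/
def AIdx {n : ℕ} (x : Fin n) (j : Fin 5) (a : ArmVert n) : Prop :=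
  a = .inner x j ∨ a = .outer x j

/-- The index relation of two vertices in the same or different copies. -/
theorem arm_adj_outer {n : ℕ} {x : Fin n} {j : Fin 5} {a : ArmVert n}
    (h : (armGraph n).Adj a (.outer x j)) :
    (∃ i, (i = j ∨ fin5adj i j ∨ fin5adj j i) ∧ AIdx x i a) ∨
    (j = 0 ∧ alev a = x) ∨ (j = 2 ∧ alev a = x + 2) := by
  rw [arm_adj_iff] at h
  obtain ⟨-, h⟩ := h
  cases a <;> simp_all [armRel, alev, AIdx] <;> grind

theorem arm_adj_idx {n : ℕ} {x : Fin n} {j : Fin 5} {a b : ArmVert n} (hb : AIdx x j b)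
    (h : (armGraph n).Adj a b) :
    (∃ i, (i = j ∨ fin5adj i j ∨ fin5adj j i) ∧ AIdx x i a) ∨ a = .center x ∨
    (j = 0 ∧ alev a = x) ∨ (j = 2 ∧ alev a = x + 2) := by
  rcases hb with rfl | rfl
  · rw [arm_adj_iff] at h
    obtain ⟨-, h⟩ := h
    cases a <;> simp_all [armRel, AIdx] <;> grind
  · rcases arm_adj_outer h with h | h
    · exact Or.inl h
    · exact Or.inr (Or.inr h)

theorem AIdx.lev {n : ℕ} {x : Fin n} {j : Fin 5} {a : ArmVert n} (h : AIdx x j a) :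
    alev a = x + 1 := by
  rcases h with rfl | rfl <;> rfl

theorem AIdx.inj {n : ℕ} {x : Fin n} {j j' : Fin 5} {a : ArmVert n} (h : AIdx x j a)
    (h' : AIdx x j' a) : j = j' := by
  rcases h with rfl | rfl <;> rcases h' with h' | h' <;> cases h' <;> rfl

theorem AIdx.adj {n : ℕ} {x : Fin n} {j i : Fin 5} {a : ArmVert n} (h : AIdx x j a)
    (hij : fin5adj j i) (hne : j ≠ i) : (armGraph n).Adj a (.outer x i) := by
  rw [arm_adj_iff]
  rcases h with rfl | rfl
  · exact ⟨by simp, Or.inl ⟨rfl, Or.inr hij⟩⟩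
  · exact ⟨by simpa using hne, Or.inl (Or.inl ⟨rfl, hij⟩)⟩

theorem arm_common3 {n : ℕ} {x : Fin n} {j : Fin 5} {a b : ArmVert n} (ha : AIdx x j a)
    (hb : (armGraph n).Adj a b) (hs : (armGraph n).Adj b (.outer x (j + 3))) :
    AIdx x (j + 4) b := by
  rcases arm_adj_outer hs with ⟨i, hi, hbi⟩ | ⟨h1, h2⟩ | ⟨h1, h2⟩
  · rcases arm_adj_idx ha hb.symm with ⟨i', hi', hbi'⟩ | h | ⟨-, h⟩ | ⟨-, h⟩
    · have := hbi.inj hbi'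
      subst this
      rw [← fin5adj_common3 j i hi' hi]
      exact hbi
    · subst h; rcases hbi with h | h <;> cases h
    · have := hbi.lev; omega
    · have := hbi.lev; omega
  · rcases arm_adj_idx ha hb.symm with ⟨i', hi', hbi'⟩ | h | ⟨h, -⟩ | ⟨-, h⟩
    · have := hbi'.lev; omega
    · subst h; simp [alev] at h2
    · subst h; exact absurd h1 (by decide)
    · omega
  · rcases arm_adj_idx ha hb.symm with ⟨i', hi', hbi'⟩ | h | ⟨-, h⟩ | ⟨h, -⟩
    · have := hbi'.lev; omega
    · subst h; simp [alev] at h2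
    · omega
    · subst h; exact absurd h1 (by decide)

theorem arm_common2 {n : ℕ} {x : Fin n} {j : Fin 5} {a b : ArmVert n} (ha : AIdx x j a)
    (hb : (armGraph n).Adj a b) (hs : (armGraph n).Adj b (.outer x (j + 2))) :
    AIdx x (j + 1) b := by
  rcases arm_adj_outer hs with ⟨i, hi, hbi⟩ | ⟨h1, h2⟩ | ⟨h1, h2⟩
  · rcases arm_adj_idx ha hb.symm with ⟨i', hi', hbi'⟩ | h | ⟨-, h⟩ | ⟨-, h⟩
    · have := hbi.inj hbi'
      subst this
      rw [← fin5adj_common2 j i hi' hi]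
      exact hbi
    · subst h; rcases hbi with h | h <;> cases h
    · have := hbi.lev; omega
    · have := hbi.lev; omega
  · rcases arm_adj_idx ha hb.symm with ⟨i', hi', hbi'⟩ | h | ⟨h, -⟩ | ⟨-, h⟩
    · have := hbi'.lev; omega
    · subst h; simp [alev] at h2
    · subst h; exact absurd h1 (by decide)
    · omega
  · rcases arm_adj_idx ha hb.symm with ⟨i', hi', hbi'⟩ | h | ⟨-, h⟩ | ⟨h, -⟩
    · have := hbi'.lev; omega
    · subst h; simp [alev] at h2
    · omega
    · subst h; exact absurd h1 (by decide)

/-- Indices at cyclic distance two are not adjacent. -/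
theorem arm_not_adj {n : ℕ} {x : Fin n} {j i : Fin 5} {a : ArmVert n} (ha : AIdx x j a)
    (hij : i = j + 2 ∨ i = j + 3) : ¬ (armGraph n).Adj a (.outer x i) := by
  intro h
  rcases arm_adj_outer h with ⟨i', hi, hbi⟩ | ⟨h1, h2⟩ | ⟨h1, h2⟩
  · have := hbi.inj ha
    subst this
    have key : ∀ i i' : Fin 5, (i = i' + 2 ∨ i = i' + 3) →
        ¬ (i' = i ∨ fin5adj i' i ∨ fin5adj i i') := by
      unfold fin5adj; decide
    exact key i i' hij hi
  · have := ha.lev; omega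
  · have := ha.lev; omega

theorem arm_reach {n : ℕ} (a : ArmVert n) : (armGraph n).Reachable .start a := by
  have step : ∀ (x : Fin n) (j i : Fin 5), fin5adj j i → j ≠ i →
      (armGraph n).Adj (.outer x j) (.outer x i) :=
    fun x j i h hne => AIdx.adj (Or.inr rfl) h hne
  have hout : ∀ (x : Fin n), (armGraph n).Reachable .start (.outer x 0) →
      ∀ i, (armGraph n).Reachable .start (.outer x i) := by
    intro x h
    have h1 := h.trans (step x 0 1 (by unfold fin5adj; decide) (by decide)).reachable
    have h2 := h1.trans (step x 1 2 (by unfold fin5adj; decide) (by decide)).reachable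
    have h3 := h2.trans (step x 2 3 (by unfold fin5adj; decide) (by decide)).reachable
    have h4 := h3.trans (step x 3 4 (by unfold fin5adj; decide) (by decide)).reachable
    intro i
    fin_cases i
    exacts [h, h1, h2, h3, h4]
  have h0 : ∀ (y : ℕ) (hy : y < n), (armGraph n).Reachable .start (.outer ⟨y, hy⟩ 0) := by
    intro y
    induction y with
    | zero =>
      intro hy
      apply SimpleGraph.Adj.reachable
      rw [arm_adj_iff]
      exact ⟨by simp, Or.inl ⟨rfl, rfl⟩⟩
    | succ y ih =>
      intro hy
      refine (hout ⟨y, by omega⟩ (ih (by omega)) 2).trans (SimpleGraph.Adj.reachable ?_)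
      rw [arm_adj_iff]
      exact ⟨by simp, Or.inl (Or.inr ⟨rfl, rfl, rfl⟩)⟩
  have hin : ∀ (x : Fin n) i, (armGraph n).Reachable .start (.inner x i) := by
    intro x i
    refine (hout x (h0 x x.2) i).trans (SimpleGraph.Adj.reachable ?_)
    rw [arm_adj_iff]
    exact ⟨by simp, Or.inr ⟨rfl, Or.inl rfl⟩⟩
  cases a with
  | start => exact SimpleGraph.Reachable.refl _
  | inner x i => exact hin x i
  | outer x i => exact hout x (h0 x x.2) i
  | center x =>
    refine (hin x 0).trans (SimpleGraph.Adj.reachable ?_)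
    rw [arm_adj_iff]
    exact ⟨by simp, Or.inl rfl⟩
  | finish =>
    rcases Nat.eq_zero_or_pos n with hn | hn
    · apply SimpleGraph.Adj.reachable
      rw [arm_adj_iff]
      exact ⟨by simp, Or.inl hn⟩
    · refine (hout ⟨n - 1, by omega⟩ (h0 _ _) 2).trans (SimpleGraph.Adj.reachable ?_)
      rw [arm_adj_iff]
      exact ⟨by simp, Or.inl ⟨Nat.sub_add_cancel hn, rfl⟩⟩

/-! ### Structure of `Z_{k,m}(H)` -/

/-- The graph `Z` with a free length parameter. -/
def Zg {W : Type*} (H : SimpleGraph W) (m p : ℕ) : SimpleGraph (ZVert W m p) :=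
  SimpleGraph.fromRel (zRel H m p)

/-- A vertex of the arm `(v, i)`. -/
abbrev AV {W : Type*} {m p : ℕ} (v : W) (i : Fin m) (a : ArmVert p) : ZVert W m p :=
  Sum.inr (Sum.inr (v, i, a))

/-- The root in `H` of the pendant piece of a vertex. -/
def sh {W : Type*} {m p : ℕ} : ZVert W m p → W
  | Sum.inl w => w
  | Sum.inr (Sum.inl (w, _)) => w
  | Sum.inr (Sum.inr (w, _, _)) => w

section
variable {W : Type*} {H : SimpleGraph W} {m p : ℕ}

theorem zg_adj_iff (u w : ZVert W m p) :
    (Zg H m p).Adj u w ↔ u ≠ w ∧ (zRel H m p u w ∨ zRel H m p w u) := Iff.rfl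

theorem zg_adj_inl (w w' : W) :
    (Zg H m p).Adj (Sum.inl w) (Sum.inl w') ↔ H.Adj w w' := by
  rw [zg_adj_iff]
  simp only [zRel]
  constructor
  · rintro ⟨-, h | h⟩
    · exact h
    · exact h.symm
  · intro h
    exact ⟨by simpa using h.ne, Or.inl h⟩

theorem zg_adj_pend {u : W × Fin p ⊕ W × Fin m × ArmVert p} {w : ZVert W m p}
    (h : (Zg H m p).Adj (Sum.inr u) w) :
    sh w = sh (Sum.inr u : ZVert W m p) := by
  rw [zg_adj_iff] at h
  obtain ⟨-, h⟩ := h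
  rcases u with ⟨u1, u2⟩ | ⟨u1, u2, u3⟩ <;> rcases w with w | ⟨w1, w2⟩ | ⟨w1, w2, w3⟩ <;>
    simp_all [zRel, sh] <;> grind

theorem zg_adj_arm {v : W} {i : Fin m} {a b : ArmVert p} :
    (Zg H m p).Adj (AV v i a) (AV v i b) ↔ (armGraph p).Adj a b := by
  rw [zg_adj_iff]
  simp only [zRel]
  constructor
  · rintro ⟨-, h | h⟩
    · exact h.2.2
    · exact h.2.2.symm
  · intro h
    exact ⟨by simpa using h.ne, Or.inl ⟨trivial, trivial, h⟩⟩

theorem zg_adj_start (v : W) (i : Fin m) :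
    (Zg H m p).Adj (Sum.inl v) (AV v i .start) := by
  rw [zg_adj_iff]
  exact ⟨by simp, Or.inl ⟨rfl, rfl⟩⟩

theorem zg_to_arm {v : W} {i : Fin m} {a : ArmVert p} {u : ZVert W m p}
    (h : (Zg H m p).Adj u (AV v i a)) :
    (∃ b, u = AV v i b ∧ (armGraph p).Adj b a) ∨ (u = Sum.inl v ∧ a = .start) := by
  rw [zg_adj_iff] at h
  obtain ⟨-, h⟩ := h
  rcases u with u | ⟨u1, u2⟩ | ⟨u1, u2, u3⟩
  · right
    simpa [zRel] using h
  · simp [zRel] at h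
  · left
    refine ⟨u3, ?_⟩
    simp only [zRel] at h
    rcases h with ⟨h1, h2, h3⟩ | ⟨h1, h2, h3⟩
    · subst h1 h2; exact ⟨rfl, h3⟩
    · subst h1 h2; exact ⟨rfl, h3.symm⟩

theorem zg_reach_sh (u : ZVert W m p) : (Zg H m p).Reachable (Sum.inl (sh u)) u := by
  rcases u with u | ⟨w, j, hj⟩ | ⟨w, i, a⟩
  · exact SimpleGraph.Reachable.refl _
  · induction j with
    | zero =>
      apply SimpleGraph.Adj.reachable
      rw [zg_adj_iff]
      exact ⟨by simp, Or.inl ⟨rfl, rfl⟩⟩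
    | succ j ih =>
      refine (ih (by omega)).trans (SimpleGraph.Adj.reachable ?_)
      rw [zg_adj_iff]
      exact ⟨by simp, Or.inl ⟨rfl, rfl⟩⟩
  · refine (zg_adj_start w i).reachable.trans ?_
    let f : armGraph p →g Zg H m p := ⟨fun a => AV w i a, fun h => zg_adj_arm.2 h⟩
    exact (arm_reach a).map f

/-- The inclusion of `H`. -/
def inlHom (H : SimpleGraph W) (m p : ℕ) : H →g Zg H m p :=
  ⟨fun w => Sum.inl w, fun h => (zg_adj_inl _ _).2 h⟩

theorem zg_connected (hH : H.Connected) : (Zg H m p).Connected := by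
  have := hH.nonempty
  refine (SimpleGraph.connected_iff _).2 ⟨?_, ⟨Sum.inl hH.nonempty.some⟩⟩
  intro u w
  exact (zg_reach_sh u).symm.trans
    (((hH.preconnected (sh u) (sh w)).map (inlHom H m p)).trans (zg_reach_sh w))

theorem zg_dist_inl_le (hH : H.Connected) (w w' : W) :
    (Zg H m p).dist (Sum.inl w) (Sum.inl w') ≤ H.dist w w' := by
  obtain ⟨q, hq⟩ := hH.exists_walk_length_eq_dist w w'
  have := SimpleGraph.dist_le (q.map (inlHom H m p))
  rw [SimpleGraph.Walk.length_map, hq] at this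
  exact this

/-- The vertex is not beyond the entry of copy `x` of the arm `(v, i)`. -/
def Beh (v : W) (i : Fin m) (x : ℕ) (u : ZVert W m p) : Prop :=
  ∀ a, u = AV v i a → alev a ≤ x

theorem beh_cut {v : W} {i : Fin m} {x : ℕ} (hx : x < p) (u w : ZVert W m p)
    (hu : Beh v i x u) (h : (Zg H m p).Adj u w) :
    Beh v i x w ∨ w = AV v i (.outer ⟨x, hx⟩ 0) := by
  by_cases hw : Beh v i x w
  · exact Or.inl hw
  · right
    unfold Beh at hw
    push Not at hw
    obtain ⟨a, rfl, ha⟩ := hw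
    rcases zg_to_arm h with ⟨b, rfl, hb⟩ | ⟨rfl, rfl⟩
    · rw [arm_adj_lev hx hb (hu b rfl) ha]
    · simp [alev] at ha

theorem beh_mono {v : W} {i : Fin m} {x y : ℕ} (hxy : x ≤ y) {u : ZVert W m p}
    (h : Beh v i x u) : Beh v i y u := fun a ha => (h a ha).trans hxy

theorem not_beh_outer {v : W} {i : Fin m} {x : ℕ} (hx : x < p) (j : Fin 5) :
    ¬ Beh v i x (AV v i (.outer ⟨x, hx⟩ j) : ZVert W m p) := by
  intro h
  have := h _ rfl
  simp [alev] at this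

/-- Vertices in the arm `(v, i)` at index `j` of copy `x`. -/
def ZIdx (v : W) (i : Fin m) (x : Fin p) (j : Fin 5) (u : ZVert W m p) : Prop :=
  ∃ a, u = AV v i a ∧ AIdx x j a

/-- A depth function: distance to the root. -/
noncomputable def dep (H : SimpleGraph W) (u : ZVert W m p) : ℕ :=
  (Zg H m p).dist u (Sum.inl (sh u))

theorem dep_inl (w : W) : dep (m := m) (p := p) H (Sum.inl w) = 0 := by
  simp [dep, sh]

theorem pend_cut (w : W) (u u' : ZVert W m p)
    (hu : ∃ y, u = Sum.inr y ∧ sh u = w) (h : (Zg H m p).Adj u u') :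
    (∃ y, u' = Sum.inr y ∧ sh u' = w) ∨ u' = Sum.inl w := by
  obtain ⟨y, rfl, hy⟩ := hu
  have h1 := zg_adj_pend h
  rcases u' with u' | u'
  · right
    rw [hy] at h1
    rw [← h1]; rfl
  · left
    exact ⟨u', rfl, h1.trans hy⟩

/-- Zombie moves when the survivor is in `H`. -/
theorem move_H (hH : H.Connected) {v : W} {u u' : ZVert W m p} (hadj : (Zg H m p).Adj u u')
    (hlt : (Zg H m p).dist u' (Sum.inl v) < (Zg H m p).dist u (Sum.inl v)) :
    dep H u' = dep H u - 1 ∧ (sh u' = sh u ∨ H.Adj (sh u) (sh u')) := by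
  have hG := zg_connected (m := m) (p := p) hH
  rcases u with w | y
  · rcases u' with w' | y'
    · rw [dep_inl, dep_inl]
      exact ⟨rfl, Or.inr ((zg_adj_inl _ _).1 hadj)⟩
    · exfalso
      have h1 := zg_adj_pend hadj.symm
      have h2 := dist_cut hG (fun u => ∃ y, u = Sum.inr y ∧ sh u = w) (Sum.inl w)
        (pend_cut w) (u := Sum.inr y') (s := Sum.inl v) (Or.inl ⟨y', rfl, h1.symm⟩)
        (by rintro ⟨y, h, -⟩; cases h)
      omega
  · have h1 := move_cut hG (fun u => ∃ z, u = Sum.inr z ∧ sh u = sh (Sum.inr y : ZVert W m p))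
      (Sum.inl (sh (Sum.inr y : ZVert W m p))) (pend_cut _) (s := Sum.inl v) ⟨y, rfl, rfl⟩
      (by rintro ⟨y, h, -⟩; cases h) hadj hlt
    have h2 := zg_adj_pend hadj
    refine ⟨?_, Or.inl h2⟩
    unfold dep
    rw [h2]
    omega

end


/-! ### Local moves in an arm -/

section
variable {W : Type*} {H : SimpleGraph W} {m p : ℕ}

theorem zidx_adj {v : W} {i : Fin m} {x : Fin p} {j l : Fin 5} {u : ZVert W m p}
    (hu : ZIdx v i x j u) (h : fin5adj j l) (hne : j ≠ l) :
    (Zg H m p).Adj u (AV v i (.outer x l)) := by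
  obtain ⟨a, rfl, ha⟩ := hu
  exact zg_adj_arm.2 (ha.adj h hne)

theorem dist_le_two {V : Type*} {G : SimpleGraph V} {u w s : V} (h1 : G.Adj u w)
    (h2 : G.Adj w s) : G.dist u s ≤ 2 := by
  simpa using SimpleGraph.dist_le (SimpleGraph.Walk.cons h1 (SimpleGraph.Walk.cons h2 .nil))

theorem two_le_dist {V : Type*} {G : SimpleGraph V} (hG : G.Connected) {u s : V} (h1 : u ≠ s)
    (h2 : ¬ G.Adj u s) : 2 ≤ G.dist u s := by
  have h3 : G.dist u s ≠ 0 := fun h => h1 (hG.dist_eq_zero_iff.1 h)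
  have h4 : G.dist u s ≠ 1 := fun h => h2 (SimpleGraph.dist_eq_one_iff_adj.1 h)
  omega

theorem free_of_dist {V : Type*} {G : SimpleGraph V} {u s : V} (h : 2 ≤ G.dist u s) :
    u ≠ s ∧ ¬ G.Adj u s := by
  constructor
  · rintro rfl
    simp at h
  · intro h1
    rw [SimpleGraph.dist_eq_one_iff_adj.2 h1] at h
    omega

theorem eq_or_adj_of_dist {V : Type*} {G : SimpleGraph V} (hG : G.Connected) {u s : V}
    (h : G.dist u s < 2) : u = s ∨ G.Adj u s := by
  by_contra hc
  push Not at hc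
  have := two_le_dist hG hc.1 hc.2
  omega

theorem zidx_free {v : W} {i : Fin m} {x : Fin p} {j l : Fin 5} {u : ZVert W m p}
    (hu : ZIdx v i x j u) (hl : l = j + 2 ∨ l = j + 3) :
    u ≠ AV v i (.outer x l) ∧ ¬ (Zg H m p).Adj u (AV v i (.outer x l)) := by
  obtain ⟨a, rfl, ha⟩ := hu
  constructor
  · intro h
    have h' : a = .outer x l := by simpa [AV] using h
    have := ha.inj (Or.inr h')
    subst this
    have key : ∀ j : Fin 5, ¬ (j = j + 2 ∨ j = j + 3) := by decide
    exact key _ hl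
  · rw [zg_adj_arm]
    exact arm_not_adj ha hl

theorem zidx_move3 (hG : (Zg H m p).Connected) {v : W} {i : Fin m} {x : Fin p} {j : Fin 5}
    {u u' : ZVert W m p} (hu : ZIdx v i x j u) (hadj : (Zg H m p).Adj u u')
    (hlt : (Zg H m p).dist u' (AV v i (.outer x (j + 3)))
      < (Zg H m p).dist u (AV v i (.outer x (j + 3)))) : ZIdx v i x (j + 4) u' := by
  have h0 := zidx_free (H := H) hu (Or.inr (rfl : j + 3 = j + 3))
  have h1 : (Zg H m p).dist u (AV v i (.outer x (j + 3))) ≤ 2 := by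
    refine dist_le_two (w := AV v i (.outer x (j + 4))) (zidx_adj hu (fin5adj_add4 j) ?_)
      (zidx_adj ⟨_, rfl, Or.inr rfl⟩ ?_ ?_)
    · exact (by decide : ∀ j : Fin 5, j ≠ j + 4) j
    · have : ∀ j : Fin 5, fin5adj (j + 4) (j + 3) := by unfold fin5adj; decide
      exact this j
    · exact (by decide : ∀ j : Fin 5, j + 4 ≠ j + 3) j
  rcases eq_or_adj_of_dist hG (lt_of_lt_of_le hlt h1) with h | h
  · subst h
    exact absurd hadj h0.2
  · rcases zg_to_arm h with ⟨b, rfl, hb⟩ | ⟨-, h⟩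
    · obtain ⟨a, rfl, ha⟩ := hu
      exact ⟨b, rfl, arm_common3 ha (zg_adj_arm.1 hadj) hb⟩
    · cases h

theorem zidx_move2 (hG : (Zg H m p).Connected) {v : W} {i : Fin m} {x : Fin p} {j : Fin 5}
    {u u' : ZVert W m p} (hu : ZIdx v i x j u) (hadj : (Zg H m p).Adj u u')
    (hlt : (Zg H m p).dist u' (AV v i (.outer x (j + 2)))
      < (Zg H m p).dist u (AV v i (.outer x (j + 2)))) : ZIdx v i x (j + 1) u' := by
  have h0 := zidx_free (H := H) hu (Or.inl (rfl : j + 2 = j + 2))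
  have h1 : (Zg H m p).dist u (AV v i (.outer x (j + 2))) ≤ 2 := by
    refine dist_le_two (w := AV v i (.outer x (j + 1))) (zidx_adj hu (fin5adj_add1 j) ?_)
      (zidx_adj ⟨_, rfl, Or.inr rfl⟩ ?_ ?_)
    · exact (by decide : ∀ j : Fin 5, j ≠ j + 1) j
    · have : ∀ j : Fin 5, fin5adj (j + 1) (j + 2) := by unfold fin5adj; decide
      exact this j
    · exact (by decide : ∀ j : Fin 5, j + 1 ≠ j + 2) j
  rcases eq_or_adj_of_dist hG (lt_of_lt_of_le hlt h1) with h | h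
  · subst h
    exact absurd hadj h0.2
  · rcases zg_to_arm h with ⟨b, rfl, hb⟩ | ⟨-, h⟩
    · obtain ⟨a, rfl, ha⟩ := hu
      exact ⟨b, rfl, arm_common2 ha (zg_adj_arm.1 hadj) hb⟩
    · cases h

theorem next_adj {v : W} {i : Fin m} {x : ℕ} (hx : x < p) (hx' : x + 1 < p) :
    (Zg H m p).Adj (AV v i (.outer ⟨x, hx⟩ 2)) (AV v i (.outer ⟨x + 1, hx'⟩ 0)) := by
  rw [zg_adj_arm, arm_adj_iff]
  exact ⟨by simp, Or.inl (Or.inr ⟨rfl, rfl, rfl⟩)⟩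

theorem zidx_free_next {v : W} {i : Fin m} {x : ℕ} (hx : x < p) (hx' : x + 1 < p) {j : Fin 5}
    {u : ZVert W m p} (hu : ZIdx v i ⟨x, hx⟩ j u) (hj : j ≠ 2) :
    u ≠ AV v i (.outer ⟨x + 1, hx'⟩ 0) ∧
      ¬ (Zg H m p).Adj u (AV v i (.outer ⟨x + 1, hx'⟩ 0)) := by
  obtain ⟨a, rfl, ha⟩ := hu
  constructor
  · intro h
    have h' : a = .outer ⟨x + 1, hx'⟩ 0 := by simpa [AV] using h
    subst h'
    have := ha.lev
    simp [alev] at this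
  · rw [zg_adj_arm]
    intro h
    rcases arm_adj_idx ha h.symm with ⟨l, -, hl⟩ | h | ⟨-, h⟩ | ⟨h, -⟩
    · have := hl.lev
      simp [alev] at this
    · cases h
    · simp [alev] at h
      omega
    · exact hj h

theorem beh_free {v : W} {i : Fin m} {x : ℕ} (hx : x < p) {u s : ZVert W m p}
    (hu : Beh v i x u) (hs : ¬ Beh v i x s) (hne : s ≠ AV v i (.outer ⟨x, hx⟩ 0)) :
    u ≠ s ∧ ¬ (Zg H m p).Adj u s := by
  constructor
  · rintro rfl
    exact hs hu
  · intro h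
    rcases beh_cut hx _ _ hu h with h | h
    · exact hs h
    · exact hne h

/-! ### The states of the survivor's strategy inside an arm -/

/-- Survivor at the entry of copy `x`. -/
def StA (H : SimpleGraph W) (v : W) (i : Fin m) {j : ℕ} (x : ℕ) (z : Fin j → ZVert W m p)
    (s : ZVert W m p) : Prop :=
  ∃ hx : x < p, s = AV v i (.outer ⟨x, hx⟩ 0) ∧
    (∀ t, Beh v i x (z t) ∧ 2 ≤ (Zg H m p).dist (z t) (AV v i (.outer ⟨x, hx⟩ 0))) ∧
    Pot (fun t => (Zg H m p).dist (z t) (AV v i (.outer ⟨x, hx⟩ 0)) - 2) (p - 1 - x)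

/-- Survivor one step beyond the entry of copy `x`. -/
def StB (H : SimpleGraph W) (v : W) (i : Fin m) {j : ℕ} (x : ℕ) (z : Fin j → ZVert W m p)
    (s : ZVert W m p) : Prop :=
  ∃ hx : x < p, s = AV v i (.outer ⟨x, hx⟩ 4) ∧ (∀ t, Beh v i x (z t)) ∧
    Pot (fun t => (Zg H m p).dist (z t) (AV v i (.outer ⟨x, hx⟩ 0)) - 1) (p - 1 - x)

/-- Reduction modulo five. -/
def c5 (r : ℕ) : Fin 5 := ⟨r % 5, Nat.mod_lt _ (by omega)⟩

/-- Survivor rotating in copy `x`, with `r` steps to go. -/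
def StR (H : SimpleGraph W) (v : W) (i : Fin m) {j : ℕ} (x r : ℕ) (z : Fin j → ZVert W m p)
    (s : ZVert W m p) : Prop :=
  ∃ hx : x < p, s = AV v i (.outer ⟨x, hx⟩ (c5 r + 3)) ∧ ∃ g : Fin j → ℕ,
    (∀ t, (g t = 0 ∧ ZIdx v i ⟨x, hx⟩ (c5 r) (z t)) ∨
      (0 < g t ∧ r ≤ g t ∧ Beh v i x (z t) ∧
        (Zg H m p).dist (z t) (AV v i (.outer ⟨x, hx⟩ 0)) = g t)) ∧
    Pot (fun t => g t - r) (p - 1 - x)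

/-- Survivor leaving copy `x`. -/
def StE (H : SimpleGraph W) (v : W) (i : Fin m) {j : ℕ} (x : ℕ) (z : Fin j → ZVert W m p)
    (s : ZVert W m p) : Prop :=
  ∃ hx : x < p, x + 1 < p ∧ s = AV v i (.outer ⟨x, hx⟩ 2) ∧ ∃ g : Fin j → ℕ,
    (∀ t, (g t = 0 ∧ ZIdx v i ⟨x, hx⟩ 4 (z t)) ∨ (g t = 1 ∧ ZIdx v i ⟨x, hx⟩ 0 (z t)) ∨
      (2 ≤ g t ∧ Beh v i x (z t) ∧
        (Zg H m p).dist (z t) (AV v i (.outer ⟨x, hx⟩ 0)) + 1 = g t)) ∧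
    Pot (fun t => g t - 1) (p - 1 - (x + 1))

/-- Survivor at the root `v`, about to enter the arm. -/
def StV (H : SimpleGraph W) (v : W) (i : Fin m) {j : ℕ} (z : Fin j → ZVert W m p)
    (s : ZVert W m p) : Prop :=
  0 < p ∧ s = Sum.inl v ∧ (∀ t, (∀ a, z t ≠ AV v i a) ∧
    2 ≤ (Zg H m p).dist (z t) (Sum.inl v)) ∧
    Pot (fun t => (Zg H m p).dist (z t) (Sum.inl v) - 2) (p - 1)

/-- Survivor at the first vertex of the arm. -/
def StS (H : SimpleGraph W) (v : W) (i : Fin m) {j : ℕ} (z : Fin j → ZVert W m p)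
    (s : ZVert W m p) : Prop :=
  0 < p ∧ s = AV v i .start ∧ (∀ t, (∀ a, z t ≠ AV v i a) ∧ z t ≠ Sum.inl v) ∧
    Pot (fun t => (Zg H m p).dist (z t) (Sum.inl v) - 1) (p - 1)

/-- All the arm states. -/
def StArm (H : SimpleGraph W) {j : ℕ} (z : Fin j → ZVert W m p) (s : ZVert W m p) : Prop :=
  ∃ (v : W) (i : Fin m), StV H v i z s ∨ StS H v i z s ∨ ∃ x, StA H v i x z s ∨
    StB H v i x z s ∨ (∃ r, r ≤ 5 ∧ StR H v i x r z s) ∨ StE H v i x z s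

/-- Legal zombie moves. -/
def ZLeg (G : SimpleGraph (ZVert W m p)) {j : ℕ} (z z' : Fin j → ZVert W m p)
    (s : ZVert W m p) : Prop :=
  ∀ i, G.Adj (z i) (z' i) ∧ G.dist (z' i) s < G.dist (z i) s

variable {v : W} {i : Fin m} {j x r : ℕ} {z z' : Fin j → ZVert W m p} {s : ZVert W m p}

theorem StV.step (_hG : (Zg H m p).Connected) (h : StV H v i z s) (hl : ZLeg (Zg H m p) z z' s) :
    ∃ s', (Zg H m p).Adj s s' ∧ StS H v i z' s' := by
  obtain ⟨hp, rfl, hz, hP⟩ := h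
  refine ⟨_, zg_adj_start v i, hp, rfl, fun t => ?_, hP.mono fun t => ?_⟩
  · have hf := free_of_dist (hz t).2
    refine ⟨fun a ha => ?_, fun hv => ?_⟩
    · have h1 := (hl t).1
      rw [ha] at h1
      rcases zg_to_arm h1 with ⟨b, hb, -⟩ | ⟨hb, -⟩
      · exact (hz t).1 b hb
      · exact hf.1 hb
    · have h1 := (hl t).1
      rw [hv] at h1
      exact hf.2 h1
  · have := (hl t).2
    omega

theorem StS.step (hG : (Zg H m p).Connected) (h : StS H v i z s) (hl : ZLeg (Zg H m p) z z' s) :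
    ∃ s', (Zg H m p).Adj s s' ∧ StA H v i 0 z' s' := by
  obtain ⟨hp, rfl, hz, hP⟩ := h
  have hadj : (Zg H m p).Adj (AV v i .start) (AV v i (.outer ⟨0, hp⟩ 0)) := by
    rw [zg_adj_arm, arm_adj_iff]
    exact ⟨by simp, Or.inl ⟨rfl, rfl⟩⟩
  have hm : ∀ t, (((∀ a, z' t ≠ AV v i a) ∧ z' t ≠ Sum.inl v) ∨ z' t = Sum.inl v) ∧
      (Zg H m p).dist (z' t) (Sum.inl v) + 1 = (Zg H m p).dist (z t) (Sum.inl v) := by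
    intro t
    refine move_cut hG (fun u => (∀ a, u ≠ AV v i a) ∧ u ≠ Sum.inl v) (Sum.inl v) ?_ (hz t)
      (fun h => h.1 _ rfl) (hl t).1 (hl t).2
    rintro u w ⟨h1, h2⟩ h3
    by_cases hw : w = Sum.inl v
    · exact Or.inr hw
    · refine Or.inl ⟨fun a ha => ?_, hw⟩
      subst ha
      rcases zg_to_arm h3 with ⟨b, hb, -⟩ | ⟨hb, -⟩
      · exact h1 b hb
      · exact h2 hb
  have hna : ∀ t a, z' t ≠ AV v i a := by
    intro t a
    rcases (hm t).1 with h | h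
    · exact h.1 a
    · rw [h]; simp
  refine ⟨_, hadj, hp, rfl, fun t => ⟨fun a ha => absurd ha (hna t a), ?_⟩, hP.mono fun t => ?_⟩
  · refine two_le_dist hG (hna t _) fun h => ?_
    rcases zg_to_arm h with ⟨b, hb, -⟩ | ⟨-, hb⟩
    · exact hna t b hb
    · cases hb
  · have h1 := (hm t).2
    have h2 : (Zg H m p).dist (z' t) (AV v i (.outer ⟨0, hp⟩ 0)) ≤
      (Zg H m p).dist (z' t) (Sum.inl v) + (Zg H m p).dist (Sum.inl v) _ := hG.dist_triangle
    have h3 := dist_le_two (zg_adj_start v i) hadj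
    omega

theorem StA.step (hG : (Zg H m p).Connected) (h : StA H v i x z s)
    (hl : ZLeg (Zg H m p) z z' s) :
    ∃ s', (Zg H m p).Adj s s' ∧ StB H v i x z' s' := by
  obtain ⟨hx, rfl, hz, hP⟩ := h
  have hm := fun t => move_cut hG (Beh v i x) _ (beh_cut hx) (hz t).1 (not_beh_outer hx 0)
    (hl t).1 (hl t).2
  refine ⟨AV v i (.outer ⟨x, hx⟩ 4), zidx_adj ⟨_, rfl, Or.inr rfl⟩ (fin5adj_add4 0) (by decide),
    hx, rfl, fun t => ?_, hP.mono fun t => ?_⟩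
  · rcases (hm t).1 with h | h
    · exact h
    · exfalso
      have h1 := (hm t).2
      rw [h, SimpleGraph.dist_self] at h1
      have := (hz t).2
      omega
  · have := (hm t).2
    omega

theorem StB.step (hG : (Zg H m p).Connected) (h : StB H v i x z s)
    (hl : ZLeg (Zg H m p) z z' s) :
    ∃ s', (Zg H m p).Adj s s' ∧ StR H v i x 0 z' s' := by
  obtain ⟨hx, rfl, hz, hP⟩ := h
  have hm := fun t => move_cut hG (Beh v i x) _ (beh_cut hx) (hz t) (not_beh_outer hx 4)
    (hl t).1 (hl t).2
  refine ⟨AV v i (.outer ⟨x, hx⟩ 3), zidx_adj ⟨_, rfl, Or.inr rfl⟩ (fin5adj_add4 4) (by decide),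
    hx, rfl, fun t => (Zg H m p).dist (z' t) (AV v i (.outer ⟨x, hx⟩ 0)), fun t => ?_,
    hP.mono fun t => ?_⟩
  · beta_reduce
    by_cases h0 : z' t = AV v i (.outer ⟨x, hx⟩ 0)
    · left
      rw [h0]
      exact ⟨SimpleGraph.dist_self, _, rfl, Or.inr rfl⟩
    · right
      exact ⟨hG.pos_dist_of_ne h0, by omega, ((hm t).1).resolve_right h0, rfl⟩
  · have := (hm t).2
    dsimp only
    omega

theorem StR.step (hG : (Zg H m p).Connected) (hr : r < 5) (h : StR H v i x (r + 1) z s)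
    (hl : ZLeg (Zg H m p) z z' s) :
    ∃ s', (Zg H m p).Adj s s' ∧ StR H v i x r z' s' := by
  obtain ⟨hx, rfl, g, hz, hP⟩ := h
  have hc4 : c5 (r + 1) + 4 = c5 r := by
    interval_cases r <;> decide
  have hc : c5 (r + 1) + 3 + 4 = c5 r + 3 := by
    interval_cases r <;> decide
  have hs := not_beh_outer (v := v) (i := i) hx (c5 (r + 1) + 3)
  refine ⟨AV v i (.outer ⟨x, hx⟩ (c5 r + 3)), zidx_adj ⟨_, rfl, Or.inr rfl⟩ ?_ ?_,
    hx, rfl, fun t => g t - 1, fun t => ?_, hP.mono fun t => ?_⟩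
  · rw [← hc]
    exact fin5adj_add4 _
  · rw [← hc]
    generalize c5 (r + 1) = l
    revert l
    decide
  · beta_reduce
    rcases hz t with ⟨h1, h2⟩ | ⟨h1, h2, h3, h4⟩
    · left
      refine ⟨by omega, ?_⟩
      rw [← hc4]
      exact zidx_move3 hG h2 (hl t).1 (hl t).2
    · have hm := move_cut hG (Beh v i x) _ (beh_cut hx) h3 hs (hl t).1 (hl t).2
      by_cases h0 : z' t = AV v i (.outer ⟨x, hx⟩ 0)
      · left
        have h5 := hm.2
        rw [h0, SimpleGraph.dist_self] at h5
        have h6 : r = 0 := by omega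
        subst h6
        refine ⟨by omega, ?_⟩
        rw [h0]
        exact ⟨_, rfl, Or.inr rfl⟩
      · right
        have h5 := hG.pos_dist_of_ne h0
        exact ⟨by omega, by omega, (hm.1).resolve_right h0, by omega⟩
  · dsimp only
    omega

theorem StR.step0 (hG : (Zg H m p).Connected) (h : StR H v i x 0 z s)
    (hl : ZLeg (Zg H m p) z z' s) :
    ∃ s', (Zg H m p).Adj s s' ∧ (StR H v i x 4 z' s' ∨ StE H v i x z' s') := by
  obtain ⟨hx, hs, g, hz, hP⟩ := h
  by_cases hg : ∃ t, 1 ≤ g t ∧ g t ≤ 4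
  · obtain ⟨hB, hP'⟩ := Pot.sub1 (g := g) hP hg
    subst hs
    have hs := not_beh_outer (v := v) (i := i) hx (c5 0 + 3)
    refine ⟨AV v i (.outer ⟨x, hx⟩ 2), zidx_adj ⟨_, rfl, Or.inr rfl⟩ ?_ (by decide),
      Or.inr ⟨hx, by omega, rfl, g, fun t => ?_, ?_⟩⟩
    · unfold fin5adj; decide
    · rcases hz t with ⟨h1, h2⟩ | ⟨h1, h2, h3, h4⟩
      · left
        refine ⟨h1, ?_⟩
        have := zidx_move3 hG h2 (hl t).1 (hl t).2
        exact this
      · right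
        have hm := move_cut hG (Beh v i x) _ (beh_cut hx) h3 hs (hl t).1 (hl t).2
        by_cases h0 : z' t = AV v i (.outer ⟨x, hx⟩ 0)
        · left
          have h5 := hm.2
          rw [h0, SimpleGraph.dist_self] at h5
          refine ⟨by omega, ?_⟩
          rw [h0]
          exact ⟨_, rfl, Or.inr rfl⟩
        · right
          have h5 := hG.pos_dist_of_ne h0
          exact ⟨by omega, (hm.1).resolve_right h0, by omega⟩
    · have : p - 1 - (x + 1) = p - 1 - x - 1 := by omega
      rw [this]
      exact hP'
  · push Not at hg
    have h5 : StR H v i x 5 z s := by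
      refine ⟨hx, hs, g, fun t => ?_, Pot.sub5 (g := g) hP⟩
      rcases hz t with h | ⟨h1, h2, h3, h4⟩
      · exact Or.inl h
      · exact Or.inr ⟨h1, hg t h1, h3, h4⟩
    obtain ⟨s', h1, h2⟩ := StR.step hG (by omega) h5 hl
    exact ⟨s', h1, Or.inl h2⟩

theorem StE.step (hG : (Zg H m p).Connected) (h : StE H v i x z s)
    (hl : ZLeg (Zg H m p) z z' s) :
    ∃ s', (Zg H m p).Adj s s' ∧ StA H v i (x + 1) z' s' := by
  obtain ⟨hx, hx', rfl, g, hz, hP⟩ := h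
  have hs := not_beh_outer (v := v) (i := i) hx 2
  have key : ∀ t, Beh v i (x + 1) (z' t) ∧
      2 ≤ (Zg H m p).dist (z' t) (AV v i (.outer ⟨x + 1, hx'⟩ 0)) ∧
      (Zg H m p).dist (z' t) (AV v i (.outer ⟨x + 1, hx'⟩ 0)) - 2 ≤ g t - 1 := by
    have hidx : ∀ t (l : Fin 5), ZIdx v i ⟨x, hx⟩ l (z' t) → (l = 1 ∨ l = 3) →
      Beh v i (x + 1) (z' t) ∧
      2 ≤ (Zg H m p).dist (z' t) (AV v i (.outer ⟨x + 1, hx'⟩ 0)) ∧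
      (Zg H m p).dist (z' t) (AV v i (.outer ⟨x + 1, hx'⟩ 0)) - 2 ≤ g t - 1 := by
      intro t l hi hl
      refine ⟨?_, ?_, ?_⟩
      · obtain ⟨a, h1, h2⟩ := hi
        intro b hb
        rw [h1] at hb
        have : a = b := by simpa [AV] using hb
        rw [← this, h2.lev]
      · have := zidx_free_next (H := H) hx hx' hi (by rcases hl with rfl | rfl <;> decide)
        exact two_le_dist hG this.1 this.2
      · have h1 : (Zg H m p).Adj (z' t) (AV v i (.outer ⟨x, hx⟩ 2)) := by
          refine zidx_adj hi ?_ ?_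
          · rcases hl with rfl | rfl <;> unfold fin5adj <;> decide
          · rcases hl with rfl | rfl <;> decide
        have := dist_le_two h1 (next_adj hx hx')
        omega
    intro t
    rcases hz t with ⟨h1, h2⟩ | ⟨h1, h2⟩ | ⟨h1, h2, h3⟩
    · exact hidx t 3 (zidx_move3 hG h2 (hl t).1 (hl t).2) (Or.inr rfl)
    · exact hidx t 1 (zidx_move2 hG h2 (hl t).1 (hl t).2) (Or.inl rfl)
    · have hm := move_cut hG (Beh v i x) _ (beh_cut hx) h2 hs (hl t).1 (hl t).2
      have hf : z' t ≠ AV v i (.outer ⟨x + 1, hx'⟩ 0) ∧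
          ¬ (Zg H m p).Adj (z' t) (AV v i (.outer ⟨x + 1, hx'⟩ 0)) := by
        rcases hm.1 with h | h
        · refine beh_free hx h ?_ ?_
          · intro h
            have := h _ rfl
            simp [alev] at this
          · simp [AV]
        · rw [h]
          exact zidx_free_next (H := H) hx hx' ⟨_, rfl, Or.inr rfl⟩ (by decide)
      refine ⟨?_, two_le_dist hG hf.1 hf.2, ?_⟩
      · rcases hm.1 with h | h
        · exact beh_mono (by omega) h
        · rw [h]
          intro b hb
          have : (.outer ⟨x, hx⟩ 0) = b := by simpa [AV] using hb
          rw [← this]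
          simp [alev]
      · have h4 : (Zg H m p).dist (z' t) (AV v i (.outer ⟨x + 1, hx'⟩ 0)) ≤
          (Zg H m p).dist (z' t) (AV v i (.outer ⟨x, hx⟩ 0)) +
          (Zg H m p).dist (AV v i (.outer ⟨x, hx⟩ 0)) _ := hG.dist_triangle
        have h5 : (Zg H m p).dist (AV v i (.outer ⟨x, hx⟩ 0))
            (AV v i (.outer ⟨x + 1, hx'⟩ 0)) ≤
          (Zg H m p).dist (AV v i (.outer ⟨x, hx⟩ 0)) (AV v i (.outer ⟨x, hx⟩ 2)) +
          (Zg H m p).dist (AV v i (.outer ⟨x, hx⟩ 2)) _ := hG.dist_triangle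
        have h6 : (Zg H m p).dist (AV v i (.outer ⟨x, hx⟩ 0)) (AV v i (.outer ⟨x, hx⟩ 2)) ≤ 2 :=
          dist_le_two (zidx_adj (l := 1) ⟨_, rfl, Or.inr rfl⟩ (fin5adj_add1 0) (by decide))
            (zidx_adj ⟨_, rfl, Or.inr rfl⟩ (fin5adj_add1 1) (by decide))
        have h7 := SimpleGraph.dist_eq_one_iff_adj.2 (next_adj (H := H) (v := v) (i := i) hx hx')
        have h8 := hm.2
        omega
  exact ⟨_, next_adj hx hx', hx', rfl, fun t => ⟨(key t).1, (key t).2.1⟩,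
    hP.mono fun t => (key t).2.2⟩

theorem StArm.step (hG : (Zg H m p).Connected) (h : StArm H z s)
    (hl : ZLeg (Zg H m p) z z' s) :
    ∃ s', (Zg H m p).Adj s s' ∧ StArm H z' s' := by
  obtain ⟨v, i, h⟩ := h
  rcases h with h | h | ⟨x, h | h | ⟨r, hr, h⟩ | h⟩
  · obtain ⟨s', h1, h2⟩ := h.step hG hl
    exact ⟨s', h1, v, i, Or.inr (Or.inl h2)⟩
  · obtain ⟨s', h1, h2⟩ := h.step hG hl
    exact ⟨s', h1, v, i, Or.inr (Or.inr ⟨_, Or.inl h2⟩)⟩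
  · obtain ⟨s', h1, h2⟩ := h.step hG hl
    exact ⟨s', h1, v, i, Or.inr (Or.inr ⟨_, Or.inr (Or.inl h2)⟩)⟩
  · obtain ⟨s', h1, h2⟩ := h.step hG hl
    exact ⟨s', h1, v, i, Or.inr (Or.inr ⟨_, Or.inr (Or.inr (Or.inl ⟨0, by omega, h2⟩))⟩)⟩
  · cases r with
    | zero =>
      obtain ⟨s', h1, h2⟩ := h.step0 hG hl
      rcases h2 with h2 | h2
      · exact ⟨s', h1, v, i, Or.inr (Or.inr ⟨_, Or.inr (Or.inr (Or.inl ⟨4, by omega, h2⟩))⟩)⟩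
      · exact ⟨s', h1, v, i, Or.inr (Or.inr ⟨_, Or.inr (Or.inr (Or.inr h2))⟩)⟩
    | succ r =>
      obtain ⟨s', h1, h2⟩ := StR.step hG (by omega) h hl
      exact ⟨s', h1, v, i, Or.inr (Or.inr ⟨_, Or.inr (Or.inr (Or.inl ⟨r, by omega, h2⟩))⟩)⟩
  · obtain ⟨s', h1, h2⟩ := h.step hG hl
    exact ⟨s', h1, v, i, Or.inr (Or.inr ⟨_, Or.inl h2⟩)⟩

theorem StArm.free (h : StArm H z s) (t : Fin j) : z t ≠ s ∧ ¬ (Zg H m p).Adj (z t) s := by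
  obtain ⟨v, i, h⟩ := h
  rcases h with h | h | ⟨x, h | h | ⟨r, hr, h⟩ | h⟩
  · obtain ⟨hp, rfl, hz, hP⟩ := h
    exact free_of_dist (hz t).2
  · obtain ⟨hp, rfl, hz, hP⟩ := h
    refine ⟨(hz t).1 _, fun h => ?_⟩
    rcases zg_to_arm h with ⟨b, hb, -⟩ | ⟨hb, -⟩
    · exact (hz t).1 b hb
    · exact (hz t).2 hb
  · obtain ⟨hx, rfl, hz, hP⟩ := h
    exact free_of_dist (hz t).2
  · obtain ⟨hx, rfl, hz, hP⟩ := h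
    exact beh_free hx (hz t) (not_beh_outer hx 4) (by simp [AV])
  · obtain ⟨hx, rfl, g, hz, hP⟩ := h
    rcases hz t with ⟨h1, h2⟩ | ⟨h1, h2, h3, h4⟩
    · exact zidx_free h2 (Or.inr rfl)
    · by_cases h0 : (c5 r + 3) = 0
      · have : r = 2 := by
          interval_cases r <;> first | rfl | exact absurd h0 (by decide)
        rw [h0]
        exact free_of_dist (by omega)
      · exact beh_free hx h3 (not_beh_outer hx _) (by simpa [AV] using h0)
  · obtain ⟨hx, hx', rfl, g, hz, hP⟩ := h
    rcases hz t with ⟨h1, h2⟩ | ⟨h1, h2⟩ | ⟨h1, h2, h3⟩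
    · exact zidx_free h2 (Or.inr rfl)
    · exact zidx_free h2 (Or.inl rfl)
    · exact beh_free hx h2 (not_beh_outer hx 2) (by simp [AV])

end


/-! ### The phase on `H` and the main theorem -/

section
variable {W : Type*} {H : SimpleGraph W} {m p : ℕ}

theorem exists_free_arm {j : ℕ} (hj : j < m) (z : Fin j → ZVert W m p) (v : W) :
    ∃ i : Fin m, ∀ t a, z t ≠ AV v i a := by
  by_contra hc
  push Not at hc
  choose f g hf using hc
  have hinj : Function.Injective f := by
    intro a b hab
    have h1 := hf a
    rw [hab, hf b] at h1
    simp only [AV, Sum.inr.injEq, Prod.mk.injEq] at h1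
    exact h1.2.1.symm
  have := Fintype.card_le_of_injective f hinj
  simp at this
  omega

/-- The robber is safe against the shadows of the tracked zombies, and the other zombies are
deeper in the pendant parts. -/
def HP (H : SimpleGraph W) {j q : ℕ} (τ : Fin q → Fin j) (SH : (Fin q → W) → W → Prop)
    (z : Fin j → ZVert W m p) (s : ZVert W m p) : Prop :=
  ∃ v, s = Sum.inl v ∧ SH (fun a => sh (z (τ a))) v ∧
    ∀ i, (∀ a, τ a ≠ i) → 2 ≤ dep H (z i) ∧ ∀ a, dep H (z (τ a)) ≤ dep H (z i)

/-- A set of safe positions for the robber. -/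
def SafeH (H : SimpleGraph W) {q : ℕ} (SH : (Fin q → W) → W → Prop) : Prop :=
  ∀ c r, SH c r → ∀ c', (∀ i, c' i = c i ∨ H.Adj (c i) (c' i)) →
    (∀ i, c' i ≠ r) ∧ ∃ r', (r' = r ∨ H.Adj r r') ∧ SH c' r'

theorem SafeH.free {q : ℕ} {SH : (Fin q → W) → W → Prop} (hS : SafeH H SH) {c : Fin q → W}
    {v : W} (h : SH c v) (a : Fin q) : c a ≠ v ∧ ¬ H.Adj (c a) v := by
  classical
  refine ⟨(hS c v h c fun i => Or.inl rfl).1 a, fun hadj => ?_⟩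
  refine (hS c v h (Function.update c a v) fun i => ?_).1 a (by simp)
  by_cases hi : i = a
  · subst hi
    right
    simpa using hadj
  · left
    simp [hi]

variable {j q : ℕ} {τ : Fin q → Fin j} {SH : (Fin q → W) → W → Prop}
  {z z' : Fin j → ZVert W m p} {s : ZVert W m p}

theorem HP.free (hS : SafeH H SH) (h : HP H τ SH z s) (t : Fin j) :
    z t ≠ s ∧ ¬ (Zg H m p).Adj (z t) s := by
  obtain ⟨v, rfl, h1, h2⟩ := h
  by_cases ht : ∃ a, τ a = t
  · obtain ⟨a, rfl⟩ := ht
    have hf := hS.free h1 a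
    generalize z (τ a) = u at hf
    refine ⟨?_, ?_⟩
    · rintro rfl
      exact hf.1 rfl
    · intro hadj
      rcases u with w | y
      · exact hf.2 ((zg_adj_inl _ _).1 hadj)
      · exact hf.1 (zg_adj_pend hadj).symm
  · push Not at ht
    have h3 := (h2 t ht).1
    generalize z t = u at h3
    rcases u with w | y
    · rw [dep_inl] at h3
      omega
    · refine ⟨by simp, fun hadj => ?_⟩
      have h4 := zg_adj_pend hadj
      unfold dep at h3
      rw [← h4] at h3
      have : (Zg H m p).dist (Sum.inr y) (Sum.inl v) = 1 :=
        SimpleGraph.dist_eq_one_iff_adj.2 hadj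
      simp only [sh] at h3
      omega

theorem dist_le_dep (hH : H.Connected) (hdiam : ∀ w w' : W, H.dist w w' ≤ 2)
    (u : ZVert W m p) (v : W) : (Zg H m p).dist u (Sum.inl v) ≤ dep H u + 2 := by
  have hG := zg_connected (m := m) (p := p) hH
  have h1 : (Zg H m p).dist u (Sum.inl v) ≤ (Zg H m p).dist u (Sum.inl (sh u)) +
    (Zg H m p).dist (Sum.inl (sh u)) (Sum.inl v) := hG.dist_triangle
  have h2 := zg_dist_inl_le (m := m) (p := p) hH (sh u) v
  have h3 := hdiam (sh u) v
  unfold dep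
  omega

theorem HP.step {k : ℕ} (hH : H.Connected) (hdiam : ∀ w w' : W, H.dist w w' ≤ 2)
    (hτ : Function.Injective τ) (hjm : j < m) (hp : p = 4 * (m - k))
    (hq : ∀ i, (∀ a, τ a ≠ i) → k = q + 1 ∧ k ≤ j)
    (hS : SafeH H SH) (h : HP H τ SH z s)
    (hl : ZLeg (Zg H m p) z z' s) :
    ∃ s', (s' = s ∨ (Zg H m p).Adj s s') ∧ (StArm H z' s' ∨ HP H τ SH z' s') := by
  classical
  have hG := zg_connected (m := m) (p := p) hH
  have hfree := fun t => h.free hS t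
  obtain ⟨v, rfl, h1, h2⟩ := h
  by_cases hall : ∀ i, (∀ a, τ a ≠ i) → 3 ≤ dep H (z i)
  · have hm := fun t => move_H hH (hl t).1 (hl t).2
    obtain ⟨-, r', hr, hr'⟩ := hS _ _ h1 (fun a => sh (z' (τ a))) fun a => (hm (τ a)).2
    refine ⟨Sum.inl r', ?_, Or.inr ⟨r', rfl, hr', fun i hi => ⟨?_, fun a => ?_⟩⟩⟩
    · rcases hr with rfl | hr
      · exact Or.inl rfl
      · exact Or.inr ((zg_adj_inl _ _).2 hr)
    · have := hall i hi
      have := (hm i).1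
      omega
    · have := (h2 i hi).2 a
      have := (hm i).1
      have := (hm (τ a)).1
      omega
  · push Not at hall
    obtain ⟨i, hi, hi2⟩ := hall
    obtain ⟨hkq, hkj⟩ := hq i hi
    obtain ⟨i0, hi0⟩ := exists_free_arm hjm z v
    have hst : StArm H z (Sum.inl v) := by
      refine ⟨v, i0, Or.inl ⟨by omega, rfl,
        fun t => ⟨hi0 t, two_le_dist hG (hfree t).1 (hfree t).2⟩, ?_⟩⟩
      refine Pot.of_card (s := 2) (k := k) (insert i (Finset.univ.image τ)) ?_ ?_ (by omega)
      · rw [Finset.card_insert_of_notMem (by simpa using hi), Finset.card_image_of_injective _ hτ]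
        simp [hkq]
      · intro t ht
        have h3 : dep H (z t) ≤ 2 := by
          rcases Finset.mem_insert.1 ht with rfl | ht
          · omega
          · obtain ⟨a, -, rfl⟩ := Finset.mem_image.1 ht
            have := (h2 i hi).2 a
            omega
        have := dist_le_dep hH hdiam (z t) v
        omega
    obtain ⟨s', h3, h4⟩ := hst.step hG hl
    exact ⟨s', Or.inr h3, Or.inl h4⟩

theorem safe_not_catch {k : ℕ} (hH : H.Connected) (hdiam : ∀ w w' : W, H.dist w w' ≤ 2)
    (hτ : Function.Injective τ) (hjm : j < m) (hp : p = 4 * (m - k))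
    (hq : ∀ i, (∀ a, τ a ≠ i) → k = q + 1 ∧ k ≤ j)
    (hS : SafeH H SH) (h : StArm H z s ∨ HP H τ SH z s) :
    ¬ ZombiesCatchFrom (Zg H m p) z s := by
  have hG := zg_connected (m := m) (p := p) hH
  have hfree : ∀ (z : Fin j → ZVert W m p) s, (StArm H z s ∨ HP H τ SH z s) → ∀ t,
      z t ≠ s ∧ ¬ (Zg H m p).Adj (z t) s := by
    rintro z s (h | h) t
    · exact h.free t
    · exact h.free hS t
  refine not_catch_of_safe _ (fun z s => StArm H z s ∨ HP H τ SH z s)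
    (fun z s h t => (hfree z s h t).1) ?_ z s h
  intro z s h z' hl
  refine ⟨fun t ht => (hfree z s h t).2 (ht ▸ (hl t).1), ?_⟩
  rcases h with h | h
  · obtain ⟨s', h1, h2⟩ := h.step hG hl
    exact ⟨s', Or.inr h1, Or.inl h2⟩
  · exact h.step hH hdiam hτ hjm hp hq hS hl

theorem main_lt [Fintype W] (hH : H.Connected) (k : ℕ) (hk : 1 ≤ k) (hcop : k ≤ copNumber H)
    (hdiam : ∀ w w' : W, H.dist w w' ≤ 2) (hjm : j < m) (hp : p = 4 * (m - k)) :
    ¬ ZombiesWinWith (Zg H m p) j := by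
  classical
  rintro ⟨zpos, hwin⟩
  have hG := zg_connected (m := m) (p := p) hH
  have hsafe : ∀ q, q < k → ∃ SH : (Fin q → W) → W → Prop, (∀ c, ∃ r, SH c r) ∧ SafeH H SH := by
    intro q hq
    exact exists_safe_of_not_copsWin (Nat.notMem_of_lt_sInf (lt_of_lt_of_le hq hcop))
  by_cases hjk : j < k
  · obtain ⟨SH, h1, h2⟩ := hsafe j hjk
    obtain ⟨v, hv⟩ := h1 fun a => sh (zpos a)
    refine safe_not_catch (τ := id) (k := k) hH hdiam Function.injective_id hjm hp ?_ h2
      (Or.inr ⟨v, rfl, hv, ?_⟩) (hwin (Sum.inl v))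
    · intro i hi
      exact absurd rfl (hi i)
    · intro i hi
      exact absurd rfl (hi i)
  · push Not at hjk
    obtain ⟨SH, h1, h2⟩ := hsafe (k - 1) (by omega)
    let σ := Tuple.sort fun t => dep H (zpos t)
    have hmono : Monotone ((fun t => dep H (zpos t)) ∘ σ) := Tuple.monotone_sort _
    let τ : Fin (k - 1) → Fin j := fun a => σ (Fin.castLE (by omega) a)
    have hτ : Function.Injective τ := fun a b hab => by
      have := σ.injective hab
      simpa using this
    have hlow : ∀ i, (∀ a, τ a ≠ i) → ∀ a, dep H (zpos (τ a)) ≤ dep H (zpos i) := by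
      intro i hi a
      have h3 : Fin.castLE (by omega) a ≤ σ.symm i := by
        by_contra hc
        push Not at hc
        have h4 : (σ.symm i : ℕ) < k - 1 := lt_trans hc a.2
        apply hi ⟨σ.symm i, h4⟩
        have : Fin.castLE (by omega) (⟨σ.symm i, h4⟩ : Fin (k - 1)) = σ.symm i := rfl
        simp only [τ, this, Equiv.apply_symm_apply]
      have := hmono h3
      simpa [τ] using this
    have hq : ∀ i, (∀ a, τ a ≠ i) → k = k - 1 + 1 ∧ k ≤ j := fun _ _ => ⟨by omega, hjk⟩
    by_cases hall : ∀ i, (∀ a, τ a ≠ i) → 2 ≤ dep H (zpos i)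
    · obtain ⟨v, hv⟩ := h1 fun a => sh (zpos (τ a))
      exact safe_not_catch (k := k) hH hdiam hτ hjm hp hq h2
        (Or.inr ⟨v, rfl, hv, fun i hi => ⟨hall i hi, hlow i hi⟩⟩) (hwin (Sum.inl v))
    · push Not at hall
      obtain ⟨i, hi, hi2⟩ := hall
      obtain ⟨v⟩ := hH.nonempty
      obtain ⟨i0, hi0⟩ := exists_free_arm hjm zpos v
      have hp0 : 0 < p := by omega
      have hadj : (Zg H m p).Adj (AV v i0 .start) (AV v i0 (.outer ⟨0, hp0⟩ 0)) := by
        rw [zg_adj_arm, arm_adj_iff]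
        exact ⟨by simp, Or.inl ⟨rfl, rfl⟩⟩
      refine safe_not_catch (k := k) hH hdiam hτ hjm hp hq h2
        (Or.inl ⟨v, i0, Or.inr (Or.inr ⟨0, Or.inl ⟨hp0, rfl, fun t => ⟨?_, ?_⟩, ?_⟩⟩)⟩)
        (hwin (AV v i0 (.outer ⟨0, hp0⟩ 0)))
      · exact fun a ha => absurd ha (hi0 t a)
      · refine two_le_dist hG (hi0 t _) fun h => ?_
        rcases zg_to_arm h with ⟨b, hb, -⟩ | ⟨-, hb⟩
        · exact hi0 t b hb
        · cases hb
      · refine Pot.of_card (s := 3) (k := k) (insert i (Finset.univ.image τ)) ?_ ?_ (by omega)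
        · rw [Finset.card_insert_of_notMem (by simpa using hi),
            Finset.card_image_of_injective _ hτ]
          simp
          omega
        · intro t ht
          have h3 : dep H (zpos t) ≤ 1 := by
            rcases Finset.mem_insert.1 ht with rfl | ht
            · omega
            · obtain ⟨a, -, rfl⟩ := Finset.mem_image.1 ht
              have := hlow i hi a
              omega
          have h4 := dist_le_dep hH hdiam (zpos t) v
          have h5 : (Zg H m p).dist (zpos t) (AV v i0 (.outer ⟨0, hp0⟩ 0)) ≤
            (Zg H m p).dist (zpos t) (Sum.inl v) + (Zg H m p).dist (Sum.inl v) _ :=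
            hG.dist_triangle
          have h6 := dist_le_two (zg_adj_start v i0) hadj
          omega

end

theorem finite_armVert (n : ℕ) : Finite (ArmVert n) := by
  let f : Bool ⊕ (Fin n × Fin 5) ⊕ (Fin n × Fin 5) ⊕ Fin n → ArmVert n
    | .inl true => .start
    | .inl false => .finish
    | .inr (.inl (x, i)) => .inner x i
    | .inr (.inr (.inl (x, i))) => .outer x i
    | .inr (.inr (.inr x)) => .center x
  refine Finite.of_surjective f ?_
  rintro (_ | _ | ⟨x, i⟩ | ⟨x, i⟩ | x)
  · exact ⟨.inl true, rfl⟩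
  · exact ⟨.inl false, rfl⟩
  · exact ⟨.inr (.inl (x, i)), rfl⟩
  · exact ⟨.inr (.inr (.inl (x, i))), rfl⟩
  · exact ⟨.inr (.inr (.inr x)), rfl⟩

theorem exists_zombiesWin {V : Type*} [Finite V] (G : SimpleGraph V) :
    ∃ k, ZombiesWinWith G k := by
  obtain ⟨n, ⟨e⟩⟩ := Finite.exists_equiv_fin V
  refine ⟨n, e.symm, fun s => ⟨fun _ => e.symm, fun c r hc _ _ _ => ⟨0, Or.inl ⟨⟨e (r 0), ?_⟩, ?_⟩⟩⟩⟩
  · rw [hc]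
    simp
  · intro m hm
    omega


/-- Let `m ≥ k ≥ 1` and let `H` be a finite connected graph with cop number at least `k`
and diameter at most 2.  Then `m - 1` zombies do not have a winning strategy on
`Z_{k,m}(H)`; that is, `z(Z_{k,m}(H)) ≥ m`. -/
theorem ZGraph_zombie_number_ge {W : Type*} [Fintype W] (H : SimpleGraph W)
    (hH : H.Connected) (k m : ℕ) (hk : 1 ≤ k) (hkm : k ≤ m)
    (hcop : k ≤ copNumber H) (hdiam : ∀ w w' : W, H.dist w w' ≤ 2) :
    ¬ ZombiesWinWith (ZGraph H k m) (m - 1) ∧ m ≤ zombieNumber (ZGraph H k m) := by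
  have hlt : ∀ j, j < m → ¬ ZombiesWinWith (ZGraph H k m) j :=
    fun j hj => main_lt hH k hk hcop hdiam hj rfl
  refine ⟨hlt _ (by omega), ?_⟩
  have := finite_armVert (4 * (m - k))
  refine le_csInf (exists_zombiesWin _) fun j hj => ?_
  by_contra hc
  exact hlt j (by omega) hj
end
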